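/- arXiv:2206.14032 — 3 statements merged into one kernel-verified Lean document; each statement's English description precedes it below -/
import Mathlib

section
/- Let $a$, $b$, $c$ be distinct primes with $a < b$ and $\max\{a,b,c\} < 100$. If $(a,b,c)$ is not one of $(2,3,5)$, $(2,3,11)$, $(2,5,3)$, $(2,7,3)$, $(3,5,2)$, $(3,13,2)$, then the equation $a^x + b^y = c^z$ has at most one solution in positive integers $(x,y,z)$. -/
/-! For each triple we verify a certificate.  A *region* is an equation
`A * a ^ x + B * b ^ y = C * c ^ z` in natural numbers `x, y, z` (a base equal to `1` encodes a
fixed exponent).  A certificate either splits a region according to whether one exponent is zero,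
or lists moduli which together show that the region has no solution, or recognises the
known solution.
-/

namespace PillaiCert

/-- Evaluate `n` before passing it to `k` (for kernel computation). -/
def force {α : Type} (n : ℕ) (k : ℕ → α) : α :=
  match n with
  | 0 => k 0
  | m + 1 => k (m + 1)

theorem force_eq {α : Type} (n : ℕ) (k : ℕ → α) : force n k = k n := by
  cases n <;> rfl

/-- Bounded universal quantifier. -/
def allB (f : ℕ → Bool) : ℕ → Bool
  | 0 => true
  | n + 1 => cond (f n) (allB f n) false

theorem allB_spec {f : ℕ → Bool} {n : ℕ} (h : allB f n = true) : ∀ i < n, f i = true := by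
  induction n with
  | zero => intro i hi; omega
  | succ n ih =>
    intro i hi
    cases hf : f n with
    | false => simp [allB, hf] at h
    | true =>
      simp only [allB, hf, cond_true] at h
      rcases Nat.lt_succ_iff_lt_or_eq.mp hi with h1 | h1
      · exact ih h i h1
      · exact h1 ▸ hf

/-- Search for a period of `n ↦ A * a ^ n` modulo `m`. -/
def ordGo (a m A : ℕ) : ℕ → ℕ → ℕ → ℕ
  | 0, _, _ => 0
  | f + 1, v, k =>
    force (v * a % m) fun w => cond (Nat.beq w A) k (force (k + 1) fun k' => ordGo a m A f w k')

def ord (A a m : ℕ) : ℕ := force (A % m) fun A0 => ordGo a m A0 m A0 1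

/-- A modulus together with periods of the three terms. -/
abbrev Step := ℕ × ℕ × ℕ × ℕ

def planK (A a B b C c : ℕ) : List ℕ → (List Step → Bool) → Bool
  | [], k => k []
  | m :: l, k =>
    force (ord A a m) fun ox => force (ord B b m) fun oy => force (ord C c m) fun oz =>
      planK A a B b C c l fun L => k ((m, ox, oy, oz) :: L)

theorem planK_spec (A a B b C c : ℕ) (l : List ℕ) (k : List Step → Bool)
    (h : planK A a B b C c l k = true) : ∃ L, k L = true := by
  induction l generalizing k with
  | nil => exact ⟨_, h⟩
  | cons m l ih =>
    simp only [planK, force_eq] at h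
    obtain ⟨L, hL⟩ := ih _ h
    exact ⟨_, hL⟩

def okPer (A a m o : ℕ) : Bool := Nat.beq (A * a ^ o % m) (A % m) && Nat.ble 1 o

theorem okPer_spec {A a m o : ℕ} (h : okPer A a m o = true) :
    A * a ^ o ≡ A [MOD m] ∧ 0 < o := by
  simp only [okPer, Bool.and_eq_true] at h
  exact ⟨Nat.eq_of_beq_eq_true h.1, Nat.le_of_ble_eq_true h.2⟩

theorem per_mod {A a m o : ℕ} (h : A * a ^ o ≡ A [MOD m]) (x : ℕ) :
    A * a ^ x ≡ A * a ^ (x % o) [MOD m] := by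
  have key : ∀ k r : ℕ, A * a ^ (o * k + r) ≡ A * a ^ r [MOD m] := by
    intro k r
    induction k with
    | zero => simp [Nat.ModEq]
    | succ k ih =>
      have h1 : A * a ^ (o * (k + 1) + r) = A * a ^ o * a ^ (o * k + r) := by
        rw [mul_assoc, ← pow_add]; ring_nf
      rw [h1]
      exact (h.mul_right _).trans ih
  have := key (x / o) (x % o)
  rwa [Nat.div_add_mod] at this

def okStep (A a B b C c : ℕ) (e : Step) : Bool :=
  okPer A a e.1 e.2.1 && okPer B b e.1 e.2.2.1 && okPer C c e.1 e.2.2.2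

/-- Depth first sieve over residue classes of the exponents. -/
def dfs (A a B b C c : ℕ) : List Step → ℕ → ℕ → ℕ → ℕ → ℕ → ℕ → Bool
  | [], _, _, _, _, _, _ => false
  | (m, ox, oy, oz) :: l, Lx, Ly, Lz, r, s, t =>
    force (Nat.lcm Lx ox) fun Nx => force (Nat.lcm Ly oy) fun Ny => force (Nat.lcm Lz oz) fun Nz =>
    allB (fun k => force (t + k * Lz) fun t' => force (C * c ^ (t' % oz) % m) fun w =>
      allB (fun i => force (r + i * Lx) fun r' => force (A * a ^ (r' % ox)) fun u =>
        allB (fun j => force (s + j * Ly) fun s' =>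
          cond (Nat.beq ((u + B * b ^ (s' % oy)) % m) w)
            (dfs A a B b C c l Nx Ny Nz r' s' t') true) (Ny / Ly)) (Nx / Lx)) (Nz / Lz)

theorem lift_class {L o x r : ℕ} (hL : 0 < L) (ho : 0 < o) (hx : x % L = r) :
    ∃ i < Nat.lcm L o / L, r + i * L = x % Nat.lcm L o := by
  have hN : 0 < Nat.lcm L o := Nat.lcm_pos hL ho
  refine ⟨(x % Nat.lcm L o) / L, ?_, ?_⟩
  · apply Nat.div_lt_div_of_lt_of_dvd (Nat.dvd_lcm_left L o) (Nat.mod_lt _ hN)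
  · have h1 : (x % Nat.lcm L o) % L = r := by
      rw [Nat.mod_mod_of_dvd _ (Nat.dvd_lcm_left L o), hx]
    have h2 := Nat.mod_add_div (x % Nat.lcm L o) L
    rw [h1] at h2
    rw [mul_comm]; exact h2

theorem dfs_spec (A a B b C c : ℕ) (l : List Step) (hl : ∀ e ∈ l, okStep A a B b C c e = true)
    (Lx Ly Lz r s t : ℕ) (hx : 0 < Lx) (hy : 0 < Ly) (hz : 0 < Lz)
    (h : dfs A a B b C c l Lx Ly Lz r s t = true) (x y z : ℕ)
    (hr : x % Lx = r) (hs : y % Ly = s) (ht : z % Lz = t) :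
    A * a ^ x + B * b ^ y ≠ C * c ^ z := by
  induction l generalizing Lx Ly Lz r s t with
  | nil => simp [dfs] at h
  | cons e l ih =>
    obtain ⟨m, ox, oy, oz⟩ := e
    have he := hl (m, ox, oy, oz) (by simp)
    simp only [okStep, Bool.and_eq_true] at he
    obtain ⟨⟨e1, e2⟩, e3⟩ := he
    obtain ⟨px, qx⟩ := okPer_spec e1
    obtain ⟨py, qy⟩ := okPer_spec e2
    obtain ⟨pz, qz⟩ := okPer_spec e3
    obtain ⟨i, hi, hi'⟩ := lift_class hx qx hr
    obtain ⟨j, hj, hj'⟩ := lift_class hy qy hs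
    obtain ⟨k, hk, hk'⟩ := lift_class hz qz ht
    simp only [dfs, force_eq] at h
    have h1 := allB_spec h k hk
    have h2 := allB_spec h1 i hi
    have h3 := allB_spec h2 j hj
    rw [hi', hj', hk', Nat.mod_mod_of_dvd _ (Nat.dvd_lcm_right Lx ox),
      Nat.mod_mod_of_dvd _ (Nat.dvd_lcm_right Ly oy),
      Nat.mod_mod_of_dvd _ (Nat.dvd_lcm_right Lz oz)] at h3
    intro heq
    have hb : (A * a ^ (x % ox) + B * b ^ (y % oy)) % m = C * c ^ (z % oz) % m := by
      have h4 := (per_mod px x).add (per_mod py y)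
      rw [heq] at h4
      exact h4.symm.trans (per_mod pz z)
    rw [hb, Nat.beq_refl, cond_true] at h3
    exact ih (fun e he => hl e (by simp [he])) _ _ _ _ _ _ (Nat.lcm_pos hx qx)
      (Nat.lcm_pos hy qy) (Nat.lcm_pos hz qz) h3 rfl rfl rfl heq

/-- Certificates. -/
inductive Cert where
  | M (l : List ℕ)
  | P (l : List Step)
  | X (f g : Cert)
  | Y (f g : Cert)
  | Z (f g : Cert)
  | T

def sieve (A a B b C c : ℕ) (L : List Step) : Bool :=
  L.all (okStep A a B b C c) && dfs A a B b C c L 1 1 1 0 0 0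

theorem sieve_spec {A a B b C c : ℕ} {L : List Step} (h : sieve A a B b C c L = true)
    (x y z : ℕ) : A * a ^ x + B * b ^ y ≠ C * c ^ z := by
  simp only [sieve, Bool.and_eq_true, List.all_eq_true] at h
  exact dfs_spec A a B b C c L h.1 1 1 1 0 0 0 one_pos one_pos one_pos h.2 x y z
    (Nat.mod_one _) (Nat.mod_one _) (Nat.mod_one _)

def chk (U V : ℕ) : Cert → ℕ → ℕ → ℕ → ℕ → ℕ → ℕ → Bool
  | .M l, A, a, B, b, C, c => planK A a B b C c l (sieve A a B b C c)
  | .P l, A, a, B, b, C, c => sieve A a B b C c l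
  | .X f g, A, a, B, b, C, c =>
    chk U V f A 1 B b C c && force (A * a) fun A' => chk U V g A' a B b C c
  | .Y f g, A, a, B, b, C, c =>
    chk U V f A a B 1 C c && force (B * b) fun B' => chk U V g A a B' b C c
  | .Z f g, A, a, B, b, C, c =>
    chk U V f A a B b C 1 && force (C * c) fun C' => chk U V g A a B b C' c
  | .T, A, a, B, b, C, c =>
    (Nat.beq a 1 && Nat.beq b 1 && Nat.beq A U && Nat.beq B V) ||
    (Nat.beq a 1 && Nat.beq c 1 && Nat.beq A U && Nat.beq C (U + V)) ||
    (Nat.beq b 1 && Nat.beq c 1 && Nat.beq B V && Nat.beq C (U + V))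

theorem chk_spec (U V : ℕ) (t : Cert) (A a B b C c : ℕ) (h : chk U V t A a B b C c = true)
    (x y z : ℕ) (heq : A * a ^ x + B * b ^ y = C * c ^ z) :
    A * a ^ x = U ∧ B * b ^ y = V := by
  induction t generalizing A a B b C c x y z with
  | M l =>
    obtain ⟨L, hL⟩ := planK_spec _ _ _ _ _ _ _ _ h
    exact absurd heq (sieve_spec hL x y z)
  | P l => exact absurd heq (sieve_spec h x y z)
  | X f g ihf ihg =>
    simp only [chk, force_eq, Bool.and_eq_true] at h
    cases x with
    | zero => simpa using ihf A 1 B b C c h.1 0 y z (by simpa using heq)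
    | succ x =>
      have e : A * a ^ (x + 1) = A * a * a ^ x := by ring
      rw [e] at heq ⊢
      exact ihg _ _ _ _ _ _ h.2 x y z heq
  | Y f g ihf ihg =>
    simp only [chk, force_eq, Bool.and_eq_true] at h
    cases y with
    | zero => simpa using ihf A a B 1 C c h.1 x 0 z (by simpa using heq)
    | succ y =>
      have e : B * b ^ (y + 1) = B * b * b ^ y := by ring
      rw [e] at heq ⊢
      exact ihg _ _ _ _ _ _ h.2 x y z heq
  | Z f g ihf ihg =>
    simp only [chk, force_eq, Bool.and_eq_true] at h
    cases z with
    | zero => exact ihf A a B b C 1 h.1 x y 0 (by simpa using heq)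
    | succ z =>
      have e : C * c ^ (z + 1) = C * c * c ^ z := by ring
      rw [e] at heq
      exact ihg _ _ _ _ _ _ h.2 x y z heq
  | T =>
    simp only [chk, Bool.or_eq_true, Bool.and_eq_true, Nat.beq_eq] at h
    rcases h with (⟨⟨⟨rfl, rfl⟩, rfl⟩, rfl⟩ | ⟨⟨⟨rfl, rfl⟩, rfl⟩, rfl⟩) | ⟨⟨⟨rfl, rfl⟩, rfl⟩, rfl⟩
    · simp
    · simp only [one_pow, mul_one] at heq ⊢
      exact ⟨trivial, Nat.add_left_cancel heq⟩
    · simp only [one_pow, mul_one] at heq ⊢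
      exact ⟨Nat.add_right_cancel heq, trivial⟩

/-- `(a, b, c, U, V, t)`: `t` certifies that every solution of `a ^ x + b ^ y = c ^ z` in positive
integers has `a ^ x = U` and `b ^ y = V` (with `U = V = 0` if there is no solution). -/
abbrev Entry := ℕ × ℕ × ℕ × ℕ × ℕ × Cert

def Entry.ok : Entry → Bool
  | (a, b, c, U, V, t) => chk U V t a a b b c c

def Entry.key : Entry → ℕ × ℕ × ℕ
  | (a, b, c, _) => (a, b, c)

def Uniq (k : ℕ × ℕ × ℕ) : Prop :=
  ∃ U V : ℕ, ∀ x y z : ℕ, 0 < x → 0 < y → 0 < z → k.1 ^ x + k.2.1 ^ y = k.2.2 ^ z →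
    k.1 ^ x = U ∧ k.2.1 ^ y = V

theorem uniq_of_ok {e : Entry} (h : e.ok = true) : Uniq e.key := by
  obtain ⟨a, b, c, U, V, t⟩ := e
  refine ⟨U, V, ?_⟩
  intro x y z hx hy hz heq
  obtain ⟨x, rfl⟩ := Nat.exists_eq_succ_of_ne_zero hx.ne'
  obtain ⟨y, rfl⟩ := Nat.exists_eq_succ_of_ne_zero hy.ne'
  obtain ⟨z, rfl⟩ := Nat.exists_eq_succ_of_ne_zero hz.ne'
  simp only [Entry.key, Nat.succ_eq_add_one, pow_succ'] at heq ⊢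
  exact chk_spec U V t a a b b c c h x y z heq

def tableA : List Entry := [
  (2, 3, 7, 4, 3, .X (.M [3]) (.X (.Y .T (.M [9, 13])) (.M [3, 8, 5]))),
  (2, 3, 13, 4, 9, .X (.M [3]) (.X (.Y (.M [4]) (.Y .T (.M [4, 8, 7, 9, 27, 271]))) (.M [3, 4,
    8, 5]))),
  (2, 3, 17, 8, 9, .X (.M [8]) (.X (.M [8]) (.X (.Y (.M [4]) (.Y .T (.M [3, 4, 16, 5, 32, 17,
    27, 13]))) (.X (.M [3, 13]) (.M [4, 16, 32, 3, 5, 17]))))),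
  (2, 3, 19, 16, 3, .X (.M [3]) (.X (.M [8]) (.X (.M [3]) (.X (.Y .T (.M [9])) (.M [3, 4, 5, 16,
    32, 17, 41]))))),
  (2, 3, 23, 0, 0, .M [3, 5, 13, 7]),
  (2, 3, 29, 2, 27, .X (.Y (.M [7]) (.Y (.M [4]) (.Y .T (.M [3, 4, 5, 16, 7, 9, 27, 73, 32, 19,
    81, 109])))) (.X (.M [13]) (.M [4, 8, 3, 5]))),
  (2, 3, 31, 4, 27, .X (.M [3]) (.X (.Y (.M [5]) (.Y (.M [5]) (.Y .T (.M [9, 27, 81, 5, 4, 32,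
    64, 7, 13, 73, 17, 128, 193, 256, 512, 1024, 19, 109])))) (.M [3, 8, 5]))),
  (2, 3, 37, 0, 0, .M [3, 7, 13, 37, 19]),
  (2, 3, 41, 32, 9, .Y (.M [7]) (.Y (.X (.M [4]) (.X (.M [5]) (.X (.M [5]) (.X (.M [5]) (.X .T
    (.X (.M [5]) (.M [16, 3, 5, 32, 64, 128, 17]))))))) (.M [3, 5, 41, 7, 9, 13, 73, 27]))),
  (2, 3, 43, 16, 27, .X (.M [3]) (.X (.M [8]) (.X (.M [3]) (.X (.Y (.M [7]) (.Y (.M [7]) (.Y .T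
    (.Y (.M [7]) (.M [9, 27, 81, 243, 7, 4, 19, 37, 5, 73, 32, 17, 64, 769, 128, 109, 163])))))
    (.M [3, 4, 5, 7, 13, 73, 32, 17]))))),
  (2, 3, 47, 0, 0, .M [3, 5, 17]),
  (2, 3, 53, 0, 0, .M [3, 13, 7]),
  (2, 3, 59, 32, 27, .X (.M [3, 4, 5]) (.X (.M [8]) (.X (.M [3, 4, 5]) (.X (.M [59]) (.X (.Y (.M
    [29]) (.Y (.M [29]) (.Y .T (.M [3, 4, 5, 16, 9, 7, 27, 73, 32, 17, 64, 97, 128, 19, 81,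
    109])))) (.M [4, 3, 5, 16, 32, 17, 64, 41, 11, 25, 31, 7, 97])))))),
  (2, 3, 61, 0, 0, .M [3, 5, 13]),
  (2, 3, 67, 64, 3, .Y (.X (.M [3]) (.X (.M [11]) (.X (.M [3]) (.X (.M [11]) (.X (.M [3]) (.X .T
    (.M [3, 4, 16, 5, 17, 32, 64, 128, 257]))))))) (.M [3, 11, 31, 7, 9])),
  (2, 3, 71, 0, 0, .M [3, 5, 7, 13]),
  (2, 3, 73, 64, 9, .Y (.M [73]) (.Y (.X (.M [3]) (.X (.M [8]) (.X (.M [3]) (.X (.M [9]) (.X (.M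
    [3]) (.X .T (.M [3, 16, 32, 5, 64, 128, 17]))))))) (.M [3, 9, 13, 5, 7, 27, 73]))),
  (2, 3, 79, 0, 0, .M [3, 13]),
  (2, 3, 83, 2, 81, .X (.Y (.M [41]) (.Y (.M [41]) (.Y (.M [41]) (.Y .T (.M [3, 4, 7, 13, 5, 41,
    32, 17, 64, 9, 97, 128, 577, 256, 19, 27, 81, 109, 243, 163]))))) (.M [4, 3, 5])),
  (2, 3, 89, 8, 81, .X (.M [8]) (.X (.M [8]) (.X (.Y (.M [4]) (.Y (.M [11]) (.Y (.M [4]) (.Y .T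
    (.M [3, 4, 5, 27, 7, 13, 32, 17, 64, 97, 128, 73, 19, 243, 109]))))) (.M [4, 16, 5])))),
  (2, 3, 97, 16, 81, .X (.M [3]) (.X (.M [8]) (.X (.M [3]) (.X (.Y (.M [4]) (.Y (.M [16]) (.Y (.M
    [4]) (.Y .T (.M [4, 16, 32, 9, 27, 81, 243, 5, 64, 128, 7, 19, 109, 163]))))) (.M [3, 4, 16,
    32, 5, 17]))))),
  (2, 5, 7, 2, 5, .X (.Y .T (.M [25])) (.X (.M [3]) (.M [4, 8, 3]))),
  (2, 5, 11, 0, 0, .M [5, 11]),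
  (2, 5, 13, 8, 5, .X (.M [4]) (.X (.M [3]) (.X (.Y .T (.M [3, 8, 5, 13, 7, 9, 17, 32, 64, 97,
    193, 512, 257, 1024, 25, 31])) (.M [3, 8, 7, 9, 5, 13, 16])))),
  (2, 5, 17, 0, 0, .M [3, 5]),
  (2, 5, 19, 0, 0, .M [3, 5]),
  (2, 5, 23, 0, 0, .M [3, 5]),
  (2, 5, 29, 4, 25, .X (.M [4]) (.X (.Y (.M [7]) (.Y .T (.M [5, 3, 7, 9, 13, 16, 313, 32, 37,
    19, 271, 81, 163, 243, 17, 97, 193, 641, 512, 257, 1024, 25, 11, 125, 101]))) (.M [8, 3]))),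
  (2, 5, 31, 0, 0, .M [31]),
  (2, 5, 37, 32, 5, .Y (.X (.M [4]) (.X (.M [3]) (.X (.M [9]) (.X (.M [3]) (.X .T (.M [3, 8, 16,
    5, 32, 64, 17])))))) (.M [3, 5, 13, 7, 31, 25, 11])),
  (2, 5, 41, 16, 25, .X (.M [4]) (.X (.M [5]) (.X (.M [5]) (.X (.Y (.M [8]) (.Y .T (.M [8, 3,
    16, 7, 9, 13, 32, 25, 11, 241, 64, 17, 128, 97, 256, 193, 512, 181, 19, 109, 81, 163, 243,
    1024, 257, 101, 125, 151]))) (.M [8, 5, 3, 16, 32, 17]))))),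
  (2, 5, 43, 0, 0, .M [3, 7, 9, 13]),
  (2, 5, 47, 0, 0, .M [3, 5]),
  (2, 5, 53, 0, 0, .M [3, 5]),
  (2, 5, 59, 0, 0, .M [5, 3, 29, 43, 49, 13]),
  (2, 5, 61, 0, 0, .M [31]),
  (2, 5, 67, 0, 0, .M [3, 5, 13]),
  (2, 5, 71, 0, 0, .M [5, 3, 7, 9]),
  (2, 5, 73, 0, 0, .M [3, 5, 13]),
  (2, 5, 79, 0, 0, .M [3, 5]),
  (2, 5, 83, 0, 0, .M [3, 5]),
  (2, 5, 89, 64, 25, .X (.M [4]) (.X (.M [11]) (.X (.M [5]) (.X (.M [11]) (.X (.M [5]) (.X (.Y (.M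
    [8]) (.Y .T (.M [5, 3, 16, 9, 7, 13, 32, 17, 64, 27, 19, 81, 109, 163, 243, 487, 1459, 97,
    256, 193, 512, 769, 257, 11, 25, 125, 601]))) (.M [8, 3, 5, 16, 13, 32, 7, 17, 64, 128,
    97]))))))),
  (2, 5, 97, 0, 0, .M [3, 5, 13]),
  (2, 7, 5, 0, 0, .M [3, 7]),
  (2, 7, 11, 4, 7, .X (.M [3]) (.X (.Z .T (.M [11, 121, 23, 89])) (.M [8, 3]))),
  (2, 7, 13, 0, 0, .M [3]),
  (2, 7, 17, 0, 0, .M [3, 7]),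
  (2, 7, 19, 0, 0, .M [3]),
  (2, 7, 23, 16, 7, .X (.M [3]) (.X (.M [8]) (.X (.M [3]) (.X (.Y .T (.M [3, 4, 7, 9, 13, 5, 19,
    73, 64, 27, 109, 81, 163, 243, 17, 193, 97, 512, 1153, 257, 1024, 11, 25, 125, 101, 43, 49]))
    (.M [3, 4, 32, 5]))))),
  (2, 7, 29, 0, 0, .M [7, 3, 5, 13, 9]),
  (2, 7, 31, 0, 0, .M [3]),
  (2, 7, 37, 0, 0, .M [3]),
  (2, 7, 41, 0, 0, .M [3, 7]),
  (2, 7, 43, 0, 0, .M [3]),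
  (2, 7, 47, 0, 0, .M [3, 7]),
  (2, 7, 53, 4, 49, .X (.M [3]) (.X (.Y (.M [4]) (.Y .T (.M [7, 49, 343, 43, 29, 113, 883])))
    (.M [4, 8, 3]))),
  (2, 7, 59, 0, 0, .M [3, 7]),
  (2, 7, 61, 0, 0, .M [3]),
  (2, 7, 67, 0, 0, .M [3]),
  (2, 7, 71, 64, 7, .X (.M [7]) (.X (.M [7]) (.X (.M [3]) (.X (.M [7]) (.X (.M [7]) (.X (.Y .T
    (.M [7, 49, 29, 3, 71])) (.M [7, 3, 4, 9, 5, 32, 13, 19, 73, 64, 27, 109, 81, 128, 17]))))))),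
  (2, 7, 73, 0, 0, .M [3]),
  (2, 7, 79, 0, 0, .M [3]),
  (2, 7, 83, 0, 0, .M [3, 7]),
  (2, 7, 89, 0, 0, .M [3, 7]),
  (2, 7, 97, 0, 0, .M [3]),
  (2, 11, 3, 16, 11, .X (.M [11]) (.X (.M [5]) (.X (.M [11]) (.X (.Y .T (.M [121])) (.M [4, 3,
    5, 16, 32, 17]))))),
  (2, 11, 5, 4, 121, .X (.M [5]) (.X (.Z (.M [11]) (.Z (.M [11]) (.Z .T (.M [4, 3, 11, 25, 125,
    625, 251])))) (.M [4, 8, 3]))),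
  (2, 11, 7, 0, 0, .M [7]),
  (2, 11, 13, 2, 11, .X (.Y .T (.M [11, 121, 23, 3])) (.M [4, 3])),
  (2, 11, 17, 0, 0, .M [3, 11]),
  (2, 11, 19, 8, 11, .X (.M [5]) (.X (.M [3]) (.X (.Y .T (.M [11, 121, 23, 3])) (.M [3, 4, 5,
    16, 17])))),
  (2, 11, 23, 0, 0, .M [11, 3, 5, 61]),
  (2, 11, 29, 0, 0, .M [5, 3]),
  (2, 11, 31, 0, 0, .M [5]),
  (2, 11, 37, 0, 0, .M [3, 11]),
  (2, 11, 41, 0, 0, .M [5]),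
  (2, 11, 43, 32, 11, .X (.M [11]) (.X (.M [3]) (.X (.M [11]) (.X (.M [3]) (.X (.Y .T (.M [11,
    121, 23, 67])) (.M [3, 4, 5, 16, 11, 25, 7, 9, 37, 19, 27, 109, 32, 73, 17, 64, 433])))))),
  (2, 11, 47, 0, 0, .M [3, 5, 17, 13]),
  (2, 11, 53, 0, 0, .M [3, 5, 13, 7]),
  (2, 11, 59, 0, 0, .M [5, 3]),
  (2, 11, 61, 0, 0, .M [5]),
  (2, 11, 67, 0, 0, .M [3, 11]),
  (2, 11, 71, 0, 0, .M [5]),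
  (2, 11, 73, 0, 0, .M [3, 5, 37]),
  (2, 11, 79, 0, 0, .M [3, 5, 13, 7]),
  (2, 11, 83, 0, 0, .M [3, 11]),
  (2, 11, 89, 0, 0, .M [5, 3]),
  (2, 11, 97, 0, 0, .M [3, 11]),
  (2, 13, 3, 0, 0, .M [3, 13]),
  (2, 13, 5, 0, 0, .M [3, 13]),
  (2, 13, 7, 0, 0, .M [3]),
  (2, 13, 11, 0, 0, .M [3, 13]),
  (2, 13, 17, 4, 13, .X (.M [4]) (.X (.Y .T (.M [13, 169, 157])) (.X (.M [3]) (.X (.M [3, 13])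
    (.M [8, 16, 3, 32, 5, 13]))))),
  (2, 13, 19, 0, 0, .M [3]),
  (2, 13, 23, 0, 0, .M [3, 7, 13]),
  (2, 13, 29, 16, 13, .X (.M [4]) (.X (.M [7]) (.X (.M [3]) (.X (.Y .T (.M [13, 169, 157, 3]))
    (.M [3, 8, 7, 5, 16, 13, 9, 61, 37, 19, 271, 32, 73]))))),
  (2, 13, 31, 0, 0, .M [3]),
  (2, 13, 37, 0, 0, .M [3]),
  (2, 13, 41, 0, 0, .M [3, 7]),
  (2, 13, 43, 0, 0, .M [3]),
  (2, 13, 47, 0, 0, .M [3, 13]),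
  (2, 13, 53, 0, 0, .M [3, 13, 9, 7, 19]),
  (2, 13, 59, 0, 0, .M [3, 13]),
  (2, 13, 61, 0, 0, .M [3]),
  (2, 13, 67, 0, 0, .M [3]),
  (2, 13, 71, 0, 0, .M [3, 7, 13]),
  (2, 13, 73, 0, 0, .M [3]),
  (2, 13, 79, 0, 0, .M [3]),
  (2, 13, 83, 0, 0, .M [3, 7]),
  (2, 13, 89, 0, 0, .M [3, 17]),
  (2, 13, 97, 0, 0, .M [3]),
  (2, 17, 3, 64, 17, .Z (.M [17]) (.Z (.M [17, 3, 5, 257]) (.Z (.M [17]) (.Z (.X (.M [4]) (.X (.M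
    [8]) (.X (.M [16]) (.X (.M [17]) (.X (.M [17]) (.X .T (.M [32, 3, 64, 5, 17, 128,
    257]))))))) (.M [3, 9, 13, 7, 27, 73, 19, 81, 109, 433, 243, 163]))))),
  (2, 17, 5, 8, 17, .X (.M [4]) (.X (.M [8, 17]) (.X (.Y .T (.M [17, 289, 307])) (.M [8, 16, 3,
    17])))),
  (2, 17, 7, 32, 17, .X (.M [8]) (.X (.M [3]) (.X (.M [16]) (.X (.M [3]) (.X (.Z (.M [4]) (.Z .T
    (.M [7, 49, 343, 43, 29, 197]))) (.M [4, 3, 32, 5, 64, 17])))))),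
  (2, 17, 11, 0, 0, .M [3, 5, 11]),
  (2, 17, 13, 0, 0, .M [3, 17]),
  (2, 17, 19, 2, 17, .X (.Y .T (.M [17, 289, 307])) (.M [4, 3, 17])),
  (2, 17, 23, 512, 17, .X (.M [8]) (.X (.M [8]) (.X (.M [16]) (.X (.M [29]) (.X (.M [4, 3, 32,
    53]) (.X (.M [4, 3]) (.X (.M [4, 3, 11]) (.X (.M [4, 3]) (.X (.Y .T (.M [17, 289, 307])) (.M
    [4, 8, 16, 32, 64, 128, 256, 512, 1024, 3, 5, 17, 257, 9, 97, 193, 27, 73, 19, 81, 163, 243,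
    2689])))))))))),
  (2, 17, 29, 0, 0, .M [3, 5, 29]),
  (2, 17, 31, 0, 0, .M [3, 5, 17, 13, 37]),
  (2, 17, 37, 0, 0, .M [3, 9, 7, 19]),
  (2, 17, 41, 0, 0, .M [3, 5, 7, 9, 13]),
  (2, 17, 43, 0, 0, .M [3, 7, 9, 19]),
  (2, 17, 47, 0, 0, .M [3, 17, 5, 13, 37]),
  (2, 17, 53, 0, 0, .M [3, 17]),
  (2, 17, 59, 0, 0, .M [3, 17]),
  (2, 17, 61, 0, 0, .M [3, 5, 13]),
  (2, 17, 67, 0, 0, .M [3, 17]),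
  (2, 17, 71, 128, 4913, .X (.M [8]) (.X (.M [8]) (.X (.M [16]) (.X (.M [5]) (.X (.M [9]) (.X (.M
    [9]) (.X (.Y (.M [5]) (.Y (.M [5]) (.Y .T (.P [(17, 1, 1, 16), (289, 1, 1, 272), (4913, 1,
    1, 4624), (83521, 1, 1, 78608), (206347, 1, 2023, 14739)])))) (.M [4, 3, 32, 9, 7, 5, 64, 13,
    27, 73, 128, 17, 19, 81, 256, 97, 577])))))))),
  (2, 17, 73, 0, 0, .M [3, 9, 73]),
  (2, 17, 79, 0, 0, .M [3, 13, 7, 5, 17]),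
  (2, 17, 83, 0, 0, .M [3, 17]),
  (2, 17, 89, 0, 0, .M [3, 5, 17]),
  (2, 17, 97, 0, 0, .M [3, 5, 17, 7, 13]),
  (2, 19, 3, 8, 19, .X (.M [8, 5, 16, 17, 64, 41, 11, 61, 7, 97, 128, 193, 256, 19, 181]) (.X (.M
    [3]) (.X (.Z (.M [9]) (.Z (.M [19]) (.Z .T (.M [27, 81, 13, 73])))) (.M [3, 4, 5, 16,
    17])))),
  (2, 19, 5, 0, 0, .M [3, 5, 9, 19]),
  (2, 19, 7, 0, 0, .M [3]),
  (2, 19, 11, 0, 0, .M [3, 5]),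
  (2, 19, 13, 0, 0, .M [3]),
  (2, 19, 17, 0, 0, .M [3, 9, 5, 17, 13, 7, 27, 19, 37]),
  (2, 19, 23, 4, 19, .X (.M [3]) (.X (.Y .T (.M [19, 361, 229])) (.M [8, 3]))),
  (2, 19, 29, 0, 0, .M [3, 5]),
  (2, 19, 31, 0, 0, .M [3]),
  (2, 19, 37, 0, 0, .M [3]),
  (2, 19, 41, 0, 0, .M [3, 5]),
  (2, 19, 43, 0, 0, .M [3]),
  (2, 19, 47, 0, 0, .M [3, 5, 17, 13, 7]),
  (2, 19, 53, 0, 0, .M [3, 9, 19]),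
  (2, 19, 59, 0, 0, .M [3, 5]),
  (2, 19, 61, 0, 0, .M [3]),
  (2, 19, 67, 0, 0, .M [3]),
  (2, 19, 71, 0, 0, .M [3, 5]),
  (2, 19, 73, 0, 0, .M [3]),
  (2, 19, 79, 0, 0, .M [3]),
  (2, 19, 83, 64, 19, .X (.M [3]) (.X (.M [19]) (.X (.M [3]) (.X (.M [19]) (.X (.M [3]) (.X (.Y
    .T (.M [19, 361, 229])) (.M [3, 4, 5, 16, 13, 9, 19, 27, 37, 73, 32, 17, 109, 81, 64, 128,
    97]))))))),
  (2, 19, 89, 0, 0, .M [3, 5]),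
  (2, 19, 97, 0, 0, .M [3]),
  (2, 23, 3, 4, 23, .X (.M [3, 4, 16, 5, 32, 11, 25, 31, 7, 37, 19, 109, 163, 541, 1297, 64, 17,
    97, 128, 256, 512, 257, 1024, 151, 101, 211, 29, 23, 67]) (.X (.Z (.M [11]) (.Z (.M [11]) (.Z
    .T (.M [3, 4, 16, 5, 32, 9, 7, 27, 19, 81, 757])))) (.X (.M [3, 4, 16, 5, 32, 11, 25, 31, 7,
    37, 19, 109, 163, 541, 1297, 64, 17, 97, 128, 256, 512, 257, 1024, 151, 101, 211, 29, 23, 67,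
    89]) (.X (.M [11]) (.M [8, 3, 16, 5, 32, 41]))))),
  (2, 23, 5, 2, 23, .X (.Z (.M [11]) (.Z .T (.M [4, 3, 5, 16, 32, 13, 7, 37, 19, 109, 81, 64,
    17, 128, 97, 193, 1297, 243, 512, 257, 1024, 11, 25, 125, 601]))) (.X (.M [4, 3, 23]) (.M [4,
    8, 3]))),
  (2, 23, 7, 0, 0, .M [7]),
  (2, 23, 11, 0, 0, .M [11, 3, 5, 61, 13]),
  (2, 23, 13, 0, 0, .M [3, 13]),
  (2, 23, 17, 0, 0, .X (.M [16]) (.X (.M [8]) (.X (.M [16]) (.X (.M [4, 3, 23]) (.M [4, 3, 32,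
    17]))))),
  (2, 23, 19, 0, 0, .M [3, 5, 17, 13]),
  (2, 23, 29, 0, 0, .M [7, 13, 3]),
  (2, 23, 31, 8, 23, .X (.M [16]) (.X (.M [3]) (.X (.Y .T (.M [23, 529, 47, 4])) (.M [16, 3])))),
  (2, 23, 37, 0, 0, .M [3, 5, 37]),
  (2, 23, 41, 0, 0, .M [3, 5, 41]),
  (2, 23, 43, 0, 0, .M [3, 11]),
  (2, 23, 47, 0, 0, .M [23, 3, 5, 13, 37]),
  (2, 23, 53, 0, 0, .M [3, 13, 7]),
  (2, 23, 59, 0, 0, .M [3, 5, 29, 43, 71]),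
  (2, 23, 61, 0, 0, .M [3, 5, 13]),
  (2, 23, 67, 0, 0, .M [11]),
  (2, 23, 71, 0, 0, .M [7, 9]),
  (2, 23, 73, 0, 0, .M [3, 5, 13, 9]),
  (2, 23, 79, 0, 0, .M [3, 13, 7]),
  (2, 23, 83, 0, 0, .M [3, 7, 13]),
  (2, 23, 89, 0, 0, .M [11]),
  (2, 23, 97, 0, 0, .M [3, 5, 7, 37]),
  (2, 29, 3, 0, 0, .M [3, 5, 7, 13, 37, 19, 73, 109, 61, 271, 11, 41, 241, 17, 97, 577, 193, 673,
    29, 43]),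
  (2, 29, 5, 0, 0, .M [5, 3, 7, 13, 37, 19, 73, 109, 81, 271, 31, 11, 241, 17, 97, 193, 641, 257,
    163, 243, 487, 313, 521, 53, 151, 101, 251, 71, 29, 43]),
  (2, 29, 7, 0, 0, .M [7]),
  (2, 29, 11, 0, 0, .M [5, 11]),
  (2, 29, 13, 0, 0, .M [7]),
  (2, 29, 17, 0, 0, .M [3, 29]),
  (2, 29, 19, 0, 0, .M [3, 5, 7, 13]),
  (2, 29, 23, 0, 0, .M [7, 13, 37]),
  (2, 29, 31, 2, 29, .X (.Z .T (.M [31, 961, 2729])) (.X (.M [3]) (.M [4, 8, 3]))),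
  (2, 29, 37, 8, 29, .X (.M [4]) (.X (.M [3]) (.X (.Z .T (.M [37, 1369, 149])) (.M [3, 8, 5, 16,
    37])))),
  (2, 29, 41, 0, 0, .M [7]),
  (2, 29, 43, 0, 0, .M [7]),
  (2, 29, 47, 0, 0, .M [3, 5, 13, 37]),
  (2, 29, 53, 0, 0, .M [7, 13, 9]),
  (2, 29, 59, 0, 0, .M [29, 5]),
  (2, 29, 61, 32, 29, .X (.M [4]) (.X (.M [3]) (.X (.M [5]) (.X (.M [3]) (.X (.Z .T (.M [61,
    3721, 2441])) (.M [3, 5, 8, 31, 11, 41, 32, 64, 17])))))),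
  (2, 29, 67, 0, 0, .M [3, 7, 9, 67, 31, 11]),
  (2, 29, 71, 0, 0, .M [7]),
  (2, 29, 73, 0, 0, .M [3, 5, 13, 9]),
  (2, 29, 79, 0, 0, .M [3, 5, 13, 7, 9]),
  (2, 29, 83, 0, 0, .M [7]),
  (2, 29, 89, 0, 0, .M [3, 5, 7, 13]),
  (2, 29, 97, 0, 0, .M [7]),
  (2, 31, 3, 0, 0, .M [3, 5, 13, 37, 31]),
  (2, 31, 5, 0, 0, .M [5, 3, 31, 13, 37]),
  (2, 31, 7, 0, 0, .M [3]),
  (2, 31, 11, 0, 0, .M [5]),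
  (2, 31, 13, 0, 0, .M [3]),
  (2, 31, 17, 0, 0, .M [3, 5, 31]),
  (2, 31, 19, 0, 0, .M [3]),
  (2, 31, 23, 0, 0, .M [3, 31]),
  (2, 31, 29, 0, 0, .M [3, 5]),
  (2, 31, 37, 0, 0, .M [3]),
  (2, 31, 41, 0, 0, .M [5]),
  (2, 31, 43, 0, 0, .M [3]),
  (2, 31, 47, 16, 31, .X (.M [3]) (.X (.M [5]) (.X (.M [3]) (.X (.Z .T (.P [(47, 1, 46, 1),
    (2209, 1, 2162, 1), (659, 1, 94, 94)])) (.M [32, 3]))))),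
  (2, 31, 53, 0, 0, .M [3, 5, 13, 17]),
  (2, 31, 59, 0, 0, .M [3, 5]),
  (2, 31, 61, 0, 0, .M [3]),
  (2, 31, 67, 0, 0, .M [3]),
  (2, 31, 71, 0, 0, .M [5]),
  (2, 31, 73, 0, 0, .M [3]),
  (2, 31, 79, 0, 0, .M [3]),
  (2, 31, 83, 0, 0, .M [3, 5, 41]),
  (2, 31, 89, 0, 0, .M [3, 5]),
  (2, 31, 97, 0, 0, .M [3]),
  (2, 37, 3, 0, 0, .M [3, 7, 13, 37]),
  (2, 37, 5, 0, 0, .M [3, 5, 31, 7, 37]),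
  (2, 37, 7, 0, 0, .M [3]),
  (2, 37, 11, 0, 0, .M [3, 11]),
  (2, 37, 13, 0, 0, .M [3]),
  (2, 37, 17, 0, 0, .M [3, 9, 7, 27, 37]),
  (2, 37, 19, 0, 0, .M [3]),
  (2, 37, 23, 0, 0, .M [3, 11, 41]),
  (2, 37, 29, 0, 0, .M [3, 5, 7, 13]),
  (2, 37, 31, 0, 0, .M [3]),
  (2, 37, 41, 4, 37, .X (.M [4]) (.X (.Z .T (.M [41, 1681, 83])) (.M [8, 3, 5]))),
  (2, 37, 43, 0, 0, .M [3]),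
  (2, 37, 47, 0, 0, .M [3, 9, 37, 7, 27, 73]),
  (2, 37, 53, 16, 37, .X (.M [4]) (.X (.M [9]) (.X (.M [3]) (.X (.Y .T (.M [37, 1369, 149, 3]))
    (.M [3, 8, 9, 7, 27, 19, 37, 13, 5, 32, 17, 73, 81, 433]))))),
  (2, 37, 59, 0, 0, .M [3, 5, 29, 43]),
  (2, 37, 61, 0, 0, .M [3]),
  (2, 37, 67, 0, 0, .M [3]),
  (2, 37, 71, 0, 0, .M [3, 9, 7]),
  (2, 37, 73, 0, 0, .M [3]),
  (2, 37, 79, 0, 0, .M [3]),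
  (2, 37, 83, 0, 0, .M [3, 41]),
  (2, 37, 89, 0, 0, .M [3, 9, 5, 17]),
  (2, 37, 97, 0, 0, .M [3]),
  (2, 41, 3, 0, 0, .M [3, 5, 41, 7, 13, 61, 25]),
  (2, 41, 5, 0, 0, .M [5, 3, 41]),
  (2, 41, 7, 8, 41, .X (.M [7]) (.X (.M [3]) (.X (.Y .T (.P [(41, 1, 1, 40), (1681, 1, 1, 1640),
    (1723, 1, 3, 574)])) (.M [4, 16, 3])))),
  (2, 41, 11, 0, 0, .M [5]),
  (2, 41, 13, 128, 41, .X (.M [4]) (.X (.M [3]) (.X (.M [7]) (.X (.M [3]) (.X (.M [7]) (.X (.M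
    [3]) (.X (.Z (.M [5]) (.Z .T (.P [(13, 1, 12, 1), (169, 1, 156, 1), (2197, 1, 2028, 1),
    (157, 1, 52, 6), (937, 1, 312, 18), (53, 1, 52, 13), (677, 1, 169, 169)]))) (.M [8, 3, 16, 5,
    7, 13, 32, 9, 17, 64, 128, 97, 256, 193, 257])))))))),
  (2, 41, 17, 0, 0, .M [3, 5, 29, 41]),
  (2, 41, 19, 0, 0, .M [3, 5, 7, 19]),
  (2, 41, 23, 0, 0, .M [3, 5, 41]),
  (2, 41, 29, 0, 0, .M [7, 3, 5]),
  (2, 41, 31, 0, 0, .M [5]),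
  (2, 41, 37, 0, 0, .M [3, 7, 9, 13]),
  (2, 41, 43, 2, 41, .X (.Y .T (.M [41, 1681, 83])) (.M [4, 3, 7, 5, 41])),
  (2, 41, 47, 0, 0, .M [3, 5, 17, 13, 7]),
  (2, 41, 53, 0, 0, .M [3, 5, 7, 13]),
  (2, 41, 59, 0, 0, .M [5, 3]),
  (2, 41, 61, 0, 0, .M [5]),
  (2, 41, 67, 0, 0, .M [3, 7, 9, 13]),
  (2, 41, 71, 0, 0, .M [5]),
  (2, 41, 73, 32, 41, .X (.M [4]) (.X (.M [8]) (.X (.M [41]) (.X (.M [3]) (.X (.Y .T (.Y (.M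
    [3]) (.P [(41, 1, 1, 4), (1681, 1, 1, 164), (68921, 1, 1, 6724), (1723, 1, 3, 574)]))) (.X (.M
    [3]) (.M [3, 16, 5, 32, 41, 7, 9, 37, 19, 109, 64, 128, 17]))))))),
  (2, 41, 79, 0, 0, .M [3, 5, 41]),
  (2, 41, 83, 0, 0, .M [7, 3, 41]),
  (2, 41, 89, 0, 0, .M [5, 3]),
  (2, 41, 97, 0, 0, .M [3, 7, 5, 13, 9]),
  (2, 43, 3, 0, 0, .M [3, 7, 43]),
  (2, 43, 5, 0, 0, .M [3, 5, 13, 7, 9, 37, 19, 109, 73, 17, 97, 193, 81, 163, 243, 487, 313, 31,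
    271, 11, 241, 631, 43]),
  (2, 43, 7, 0, 0, .M [3]),
  (2, 43, 11, 0, 0, .M [3, 5, 37]),
  (2, 43, 13, 0, 0, .M [3]),
  (2, 43, 17, 0, 0, .M [3, 7, 9, 13, 5, 37, 19, 73, 17, 181, 11, 31, 241, 433, 97, 193, 631, 43]),
  (2, 43, 19, 0, 0, .M [3]),
  (2, 43, 23, 0, 0, .M [3, 11]),
  (2, 43, 29, 0, 0, .M [7]),
  (2, 43, 31, 0, 0, .M [3]),
  (2, 43, 37, 0, 0, .M [3]),
  (2, 43, 41, 0, 0, .M [7]),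
  (2, 43, 47, 4, 43, .X (.M [3]) (.X (.Y .T (.M [43, 1849, 173])) (.M [8, 3]))),
  (2, 43, 53, 0, 0, .M [3, 7, 13]),
  (2, 43, 59, 16, 43, .X (.M [3]) (.X (.M [8]) (.X (.M [3]) (.X (.Z .T (.P [(59, 1, 58, 1),
    (3481, 1, 3422, 1), (3541, 1, 885, 3)])) (.M [3, 4, 5, 16, 32, 17]))))),
  (2, 43, 61, 0, 0, .M [3]),
  (2, 43, 67, 0, 0, .M [3]),
  (2, 43, 71, 0, 0, .M [7]),
  (2, 43, 73, 0, 0, .M [3]),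
  (2, 43, 79, 0, 0, .M [3]),
  (2, 43, 83, 0, 0, .M [7]),
  (2, 43, 89, 0, 0, .M [3, 11]),
  (2, 43, 97, 0, 0, .M [3]),
  (2, 47, 3, 0, 0, .X (.Z (.M [47]) (.M [3, 4, 16, 5, 32, 17, 9, 7])) (.X (.M [23]) (.X (.Z (.M
    [23]) (.Z (.M [47]) (.M [3, 4, 16, 5, 32, 17, 9, 7, 97, 128, 27, 73]))) (.M [8, 3, 16, 5, 17,
    97])))),
  (2, 47, 5, 0, 0, .X (.M [31]) (.X (.M [4, 3, 47]) (.M [4, 8, 3]))),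
  (2, 47, 7, 2, 47, .X (.Z (.M [23]) (.Z .T (.M [3, 4, 32, 5, 64, 17, 128, 7, 9, 97, 256, 19,
    27, 193, 512, 1024, 769, 257, 25, 11, 271, 81, 125, 101, 251, 751, 43, 29, 343, 197]))) (.M
    [3, 4, 5])),
  (2, 47, 11, 0, 0, .M [3, 5, 17, 13, 7]),
  (2, 47, 13, 0, 0, .M [3, 13, 17, 5]),
  (2, 47, 17, 0, 0, .X (.M [17]) (.X (.M [8]) (.X (.M [16]) (.X (.Z (.M [47]) (.M [17, 289, 307]))
    (.M [4, 32, 3]))))),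
  (2, 47, 19, 0, 0, .M [3, 5, 17, 13, 7]),
  (2, 47, 23, 0, 0, .M [23]),
  (2, 47, 29, 0, 0, .M [3, 5, 13, 61]),
  (2, 47, 31, 0, 0, .M [31]),
  (2, 47, 37, 0, 0, .M [3, 37]),
  (2, 47, 41, 0, 0, .M [3, 5, 7, 61]),
  (2, 47, 43, 0, 0, .M [3, 7, 9, 13]),
  (2, 47, 53, 0, 0, .M [3, 13, 17]),
  (2, 47, 59, 0, 0, .M [3, 5, 17, 13, 7]),
  (2, 47, 61, 0, 0, .M [3, 5, 13, 7]),
  (2, 47, 67, 0, 0, .M [3, 17]),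
  (2, 47, 71, 0, 0, .M [3, 5, 7, 37]),
  (2, 47, 73, 0, 0, .M [3, 5, 13]),
  (2, 47, 79, 32, 47, .X (.M [32]) (.X (.M [3]) (.X (.M [13]) (.X (.M [3]) (.X (.Z .T (.P [(79,
    1, 78, 1), (6241, 1, 6162, 1), (317, 1, 316, 79)])) (.M [3, 4, 5, 64, 17])))))),
  (2, 47, 83, 0, 0, .M [3, 7, 19]),
  (2, 47, 89, 0, 0, .M [3, 17]),
  (2, 47, 97, 0, 0, .M [3, 5, 97]),
  (2, 53, 3, 0, 0, .X (.M [3, 4, 13, 7, 5, 73, 32, 17, 64, 577, 128, 193, 256, 19, 757, 109, 163,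
    1297, 512, 257, 41, 11, 281, 29, 883, 197, 121, 23, 53, 131]) (.X (.M [13]) (.X (.M [3, 4,
    53]) (.M [4, 8, 3, 16, 5])))),
  (2, 53, 5, 0, 0, .X (.M [4]) (.X (.M [5, 3, 53]) (.M [8, 3]))),
  (2, 53, 7, 0, 0, .M [7]),
  (2, 53, 11, 0, 0, .M [3, 5, 17]),
  (2, 53, 13, 0, 0, .M [3, 13]),
  (2, 53, 17, 0, 0, .X (.M [4]) (.X (.M [9]) (.X (.M [9]) (.X (.M [8, 3, 53]) (.M [8, 16, 3, 32,
    9, 5, 17, 13, 7, 73]))))),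
  (2, 53, 19, 0, 0, .M [3, 9, 19]),
  (2, 53, 23, 0, 0, .M [3, 53]),
  (2, 53, 29, 0, 0, .M [7, 13]),
  (2, 53, 31, 0, 0, .M [3, 5, 13, 9, 7]),
  (2, 53, 37, 0, 0, .M [3, 9, 7, 13]),
  (2, 53, 41, 0, 0, .M [3, 5, 17]),
  (2, 53, 43, 0, 0, .M [3, 7, 13]),
  (2, 53, 47, 0, 0, .M [3, 13, 5, 17]),
  (2, 53, 59, 0, 0, .M [3, 5, 17]),
  (2, 53, 61, 8, 53, .X (.M [4]) (.X (.M [3]) (.X (.Y .T (.P [(53, 1, 1, 52), (2809, 1, 1,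
    2756), (107, 1, 53, 53), (1061, 1, 265, 212)])) (.M [3, 8, 5, 16, 17])))),
  (2, 53, 67, 0, 0, .M [3, 5, 17]),
  (2, 53, 71, 0, 0, .M [7, 9]),
  (2, 53, 73, 0, 0, .M [3, 9, 13, 5]),
  (2, 53, 79, 0, 0, .M [13]),
  (2, 53, 83, 0, 0, .M [3, 13, 53]),
  (2, 53, 89, 0, 0, .M [3, 5, 17]),
  (2, 53, 97, 0, 0, .M [3, 5, 17]),
  (2, 59, 3, 0, 0, .X (.M [59]) (.X (.M [8]) (.X (.M [59]) (.M [4, 3, 5, 16, 17])))),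
  (2, 59, 5, 0, 0, .X (.M [5]) (.X (.Z (.M [59]) (.M [4, 3, 25, 11])) (.M [4, 8, 3]))),
  (2, 59, 7, 0, 0, .M [3, 5, 29, 43]),
  (2, 59, 11, 0, 0, .M [5, 3, 7, 9, 13]),
  (2, 59, 13, 0, 0, .M [3, 5, 17]),
  (2, 59, 17, 0, 0, .X (.M [8]) (.X (.M [8]) (.X (.M [29]) (.X (.Z (.M [59]) (.M [17, 289, 307]))
    (.M [4, 16, 3, 32, 5, 17, 29, 9, 13, 73]))))),
  (2, 59, 19, 0, 0, .M [3, 5, 19]),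
  (2, 59, 23, 0, 0, .M [3, 5, 11, 41, 25]),
  (2, 59, 29, 0, 0, .M [29, 5]),
  (2, 59, 31, 0, 0, .M [3, 5, 31]),
  (2, 59, 37, 0, 0, .M [3, 5, 17, 13]),
  (2, 59, 41, 0, 0, .M [5, 41]),
  (2, 59, 43, 0, 0, .M [3, 7, 9, 13]),
  (2, 59, 47, 0, 0, .M [3, 5, 17]),
  (2, 59, 53, 0, 0, .M [3, 5, 17]),
  (2, 59, 61, 2, 59, .X (.Y .T (.P [(59, 1, 1, 58), (3481, 1, 1, 3422), (3541, 1, 3, 1770)]))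
    (.M [4, 3])),
  (2, 59, 67, 8, 59, .X (.M [11]) (.X (.M [3]) (.X (.Y .T (.P [(59, 1, 1, 58), (3481, 1, 1,
    3422), (709, 1, 59, 177), (8969, 1, 236, 472)])) (.M [3, 4, 5, 16, 17])))),
  (2, 59, 71, 0, 0, .M [5, 3, 7, 13, 17]),
  (2, 59, 73, 0, 0, .M [3, 5, 41, 11]),
  (2, 59, 79, 0, 0, .M [3, 5, 13, 7]),
  (2, 59, 83, 0, 0, .M [3, 5, 17]),
  (2, 59, 89, 0, 0, .M [3, 5, 17]),
  (2, 59, 97, 0, 0, .M [3, 5, 7, 13, 9]),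
  (2, 61, 3, 0, 0, .M [3, 5, 61]),
  (2, 61, 5, 64, 61, .X (.M [4]) (.X (.M [3, 8, 31, 61]) (.X (.M [5]) (.X (.M [5]) (.X (.M [5])
    (.X (.Z (.M [61]) (.Z (.M [3]) (.Z .T (.M [3, 8, 31, 7, 13, 16, 25, 11, 181, 19, 73, 32,
    1297, 17, 97, 128, 193, 641, 512, 257, 1024, 125, 101, 251, 625])))) (.M [5, 3, 8, 31, 7, 13,
    16, 61, 11, 32, 241, 17, 64, 97, 128, 193]))))))),
  (2, 61, 7, 0, 0, .M [3]),
  (2, 61, 11, 0, 0, .M [5]),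
  (2, 61, 13, 0, 0, .M [3]),
  (2, 61, 17, 0, 0, .M [3, 5, 17, 9, 7, 13, 61]),
  (2, 61, 19, 0, 0, .M [3]),
  (2, 61, 23, 0, 0, .M [3, 5, 61]),
  (2, 61, 29, 0, 0, .M [3, 5]),
  (2, 61, 31, 0, 0, .M [3]),
  (2, 61, 37, 0, 0, .M [3]),
  (2, 61, 41, 0, 0, .M [5]),
  (2, 61, 43, 0, 0, .M [3]),
  (2, 61, 47, 0, 0, .M [3, 5, 13]),
  (2, 61, 53, 0, 0, .M [3, 13]),
  (2, 61, 59, 0, 0, .M [3, 5]),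
  (2, 61, 67, 0, 0, .M [3]),
  (2, 61, 71, 0, 0, .M [5]),
  (2, 61, 73, 0, 0, .M [3]),
  (2, 61, 79, 0, 0, .M [3]),
  (2, 61, 83, 0, 0, .M [3, 5, 13]),
  (2, 61, 89, 0, 0, .M [3, 5]),
  (2, 61, 97, 0, 0, .M [3]),
  (2, 67, 3, 0, 0, .X (.M [67]) (.X (.M [3]) (.X (.M [11, 121, 31, 67]) (.M [3, 4, 5, 16])))),
  (2, 67, 5, 0, 0, .X (.M [3]) (.X (.M [67]) (.M [4, 8, 3]))),
  (2, 67, 7, 0, 0, .M [3]),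
  (2, 67, 11, 0, 0, .M [3, 11]),
  (2, 67, 13, 0, 0, .M [3]),
  (2, 67, 17, 0, 0, .X (.M [3]) (.X (.M [8]) (.X (.M [3]) (.X (.Z (.M [67]) (.M [17, 289, 307]))
    (.M [4, 16, 3, 32, 5, 17, 9, 7, 13, 73, 27, 19, 109, 81, 433]))))),
  (2, 67, 19, 0, 0, .M [3]),
  (2, 67, 23, 0, 0, .M [11]),
  (2, 67, 29, 0, 0, .M [3, 5, 17]),
  (2, 67, 31, 0, 0, .M [3]),
  (2, 67, 37, 0, 0, .M [3]),
  (2, 67, 41, 0, 0, .M [3, 5, 41]),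
  (2, 67, 43, 0, 0, .M [3]),
  (2, 67, 47, 0, 0, .M [3, 17]),
  (2, 67, 53, 0, 0, .M [3, 11, 31]),
  (2, 67, 59, 0, 0, .M [3, 5, 17, 13]),
  (2, 67, 61, 0, 0, .M [3]),
  (2, 67, 71, 4, 67, .X (.M [3]) (.X (.Y .T (.P [(67, 1, 1, 33), (4489, 1, 1, 2211), (4423, 1,
    6, 737)])) (.M [8, 3]))),
  (2, 67, 73, 0, 0, .M [3]),
  (2, 67, 79, 0, 0, .M [3]),
  (2, 67, 83, 16, 67, .X (.M [3]) (.X (.M [8]) (.X (.M [3]) (.X (.Z .T (.P [(83, 1, 82, 1),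
    (6889, 1, 6806, 1), (997, 1, 83, 166)])) (.X (.M [3]) (.M [3, 4, 17, 5, 32, 13, 9, 19, 27, 64,
    97])))))),
  (2, 67, 89, 0, 0, .M [11]),
  (2, 67, 97, 0, 0, .M [3]),
  (2, 71, 3, 0, 0, .X (.M [3, 4, 5, 7, 13, 32, 73, 19, 109, 1297, 64, 17, 97, 128, 193, 256, 512,
    1024, 257, 41, 11, 271, 163, 601, 101, 71, 113]) (.X (.M [5]) (.X (.M [3, 4, 5, 7, 13, 32, 73,
    19, 109, 1297, 64, 17, 97, 128, 193, 256, 512, 1024, 257, 41, 11, 271, 163, 601, 101, 71]) (.M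
    [8, 3, 16, 5])))),
  (2, 71, 5, 0, 0, .M [5, 3, 7, 9, 13, 31, 61, 71]),
  (2, 71, 7, 0, 0, .M [7]),
  (2, 71, 11, 0, 0, .M [5]),
  (2, 71, 13, 0, 0, .M [7]),
  (2, 71, 17, 0, 0, .M [3, 9, 7, 5, 13, 27, 73, 19, 81, 181, 11, 41, 17, 241, 577, 97, 601, 101,
    125, 71]),
  (2, 71, 19, 0, 0, .M [3, 9, 19]),
  (2, 71, 23, 0, 0, .M [7, 9]),
  (2, 71, 29, 0, 0, .M [7]),
  (2, 71, 31, 0, 0, .M [5]),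
  (2, 71, 37, 0, 0, .M [3, 9, 7]),
  (2, 71, 41, 0, 0, .M [5]),
  (2, 71, 43, 0, 0, .M [7]),
  (2, 71, 47, 0, 0, .M [3, 5, 17, 13]),
  (2, 71, 53, 0, 0, .M [7, 9]),
  (2, 71, 59, 0, 0, .M [5, 3]),
  (2, 71, 61, 0, 0, .M [5]),
  (2, 71, 67, 0, 0, .M [3, 7, 5, 13, 31]),
  (2, 71, 73, 2, 71, .X (.Y .T (.P [(71, 1, 1, 35), (5041, 1, 1, 2485), (5113, 1, 3, 284)])) (.M
    [4, 3])),
  (2, 71, 79, 8, 71, .X (.M [5]) (.X (.M [3]) (.X (.Z .T (.P [(79, 1, 26, 1), (6241, 1, 2054,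
    1), (317, 1, 316, 79), (2371, 1, 395, 474)])) (.M [16, 3])))),
  (2, 71, 83, 0, 0, .M [7]),
  (2, 71, 89, 0, 0, .M [5, 3]),
  (2, 71, 97, 0, 0, .M [7]),
  (2, 73, 3, 8, 73, .X (.M [73]) (.X (.M [3]) (.X (.Z (.M [4]) (.Z (.M [73]) (.Z (.M [4]) (.Z .T
    (.M [4, 27, 81, 243, 7, 757]))))) (.M [3, 4, 16, 5, 13, 7])))),
  (2, 73, 5, 0, 0, .M [3, 5, 13, 9, 73]),
  (2, 73, 7, 0, 0, .M [3]),
  (2, 73, 11, 0, 0, .M [3, 5, 13, 9]),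
  (2, 73, 13, 0, 0, .M [3]),
  (2, 73, 17, 0, 0, .M [3, 9, 73]),
  (2, 73, 19, 0, 0, .M [3]),
  (2, 73, 23, 0, 0, .M [3, 9, 73]),
  (2, 73, 29, 0, 0, .M [3, 5, 13, 9]),
  (2, 73, 31, 0, 0, .M [3]),
  (2, 73, 37, 0, 0, .M [3]),
  (2, 73, 41, 0, 0, .M [3, 5, 41]),
  (2, 73, 43, 0, 0, .M [3]),
  (2, 73, 47, 0, 0, .M [3, 9, 37, 7]),
  (2, 73, 53, 0, 0, .M [3, 9, 13]),
  (2, 73, 59, 0, 0, .M [3, 5, 13, 9]),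
  (2, 73, 61, 0, 0, .M [3]),
  (2, 73, 67, 0, 0, .M [3]),
  (2, 73, 71, 0, 0, .M [3, 9, 73]),
  (2, 73, 79, 0, 0, .M [3]),
  (2, 73, 83, 0, 0, .M [3, 73]),
  (2, 73, 89, 16, 73, .X (.M [4]) (.X (.M [8]) (.X (.M [3]) (.X (.Z .T (.P [(89, 1, 22, 1),
    (7921, 1, 1958, 1), (179, 1, 178, 89)])) (.M [3, 16, 9, 5, 32, 13]))))),
  (2, 73, 97, 0, 0, .M [3]),
  (2, 79, 3, 2, 79, .X (.Z (.M [79]) (.Z (.M [13]) (.Z (.M [13]) (.Z .T (.M [9, 13, 7, 4, 5, 32,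
    27, 73, 41, 64, 17, 128, 256, 19, 81, 109, 243, 163]))))) (.X (.M [3]) (.X (.M [13, 79]) (.M
    [3, 8, 16, 5])))),
  (2, 79, 5, 0, 0, .X (.M [3]) (.X (.M [3, 4, 13, 32, 313, 169, 79]) (.M [4, 8, 3]))),
  (2, 79, 7, 0, 0, .M [3]),
  (2, 79, 11, 0, 0, .M [3, 5]),
  (2, 79, 13, 0, 0, .M [3]),
  (2, 79, 17, 0, 0, .X (.M [3]) (.X (.M [8]) (.X (.M [3]) (.X (.M [79]) (.M [4, 32, 3]))))),
  (2, 79, 19, 0, 0, .M [3]),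
  (2, 79, 23, 0, 0, .M [3, 5, 13, 7, 9]),
  (2, 79, 29, 0, 0, .M [3, 5]),
  (2, 79, 31, 0, 0, .M [3]),
  (2, 79, 37, 0, 0, .M [3]),
  (2, 79, 41, 0, 0, .M [3, 5]),
  (2, 79, 43, 0, 0, .M [3]),
  (2, 79, 47, 0, 0, .M [3, 13, 5, 17]),
  (2, 79, 53, 0, 0, .M [13]),
  (2, 79, 59, 0, 0, .M [3, 5]),
  (2, 79, 61, 0, 0, .M [3]),
  (2, 79, 67, 0, 0, .M [3]),
  (2, 79, 71, 0, 0, .M [3, 5]),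
  (2, 79, 73, 0, 0, .M [3]),
  (2, 79, 83, 4, 79, .X (.M [3]) (.X (.Y .T (.P [(79, 1, 1, 39), (6241, 1, 1, 3081), (317, 1,
    79, 158)])) (.M [8, 3]))),
  (2, 79, 89, 0, 0, .M [3, 5]),
  (2, 79, 97, 0, 0, .M [3]),
  (2, 83, 3, 0, 0, .Z (.X (.M [83]) (.M [4, 3, 41])) (.Z (.X (.M [41]) (.X (.M [41]) (.X (.M [83])
    (.M [4, 3, 16, 5])))) (.M [3, 7, 13, 5, 9, 73, 19, 27, 37]))),
  (2, 83, 5, 0, 0, .X (.M [41]) (.X (.Z (.M [83]) (.M [4, 3, 5, 13, 7, 9, 19, 27, 73, 17, 64, 97,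
    193, 256, 512, 257, 25, 31])) (.M [4, 8, 3]))),
  (2, 83, 7, 0, 0, .M [3, 7, 19]),
  (2, 83, 11, 0, 0, .M [3, 5, 11]),
  (2, 83, 13, 0, 0, .M [3, 7, 13]),
  (2, 83, 17, 0, 0, .X (.M [8]) (.X (.M [8]) (.X (.M [4, 3]) (.X (.Z (.M [83]) (.M [17, 289,
    307])) (.M [4, 16, 3, 32, 5, 17, 13, 73]))))),
  (2, 83, 19, 0, 0, .M [3, 5, 17]),
  (2, 83, 23, 0, 0, .M [3, 7, 13]),
  (2, 83, 29, 0, 0, .M [7, 3, 5, 17]),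
  (2, 83, 31, 0, 0, .M [3, 5, 13, 7]),
  (2, 83, 37, 0, 0, .M [3, 7, 13]),
  (2, 83, 41, 0, 0, .M [7, 3, 41]),
  (2, 83, 43, 0, 0, .M [3, 7, 5, 17]),
  (2, 83, 47, 0, 0, .M [3, 7, 13, 5]),
  (2, 83, 53, 0, 0, .M [3, 13, 7]),
  (2, 83, 59, 0, 0, .M [3, 5, 17]),
  (2, 83, 61, 0, 0, .M [3, 5, 13, 7]),
  (2, 83, 67, 0, 0, .M [3, 7, 13]),
  (2, 83, 71, 0, 0, .M [7, 3, 9, 5, 17]),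
  (2, 83, 73, 0, 0, .M [3, 73]),
  (2, 83, 79, 0, 0, .M [3, 7, 13]),
  (2, 83, 89, 0, 0, .M [3, 5, 17]),
  (2, 83, 97, 0, 0, .M [3, 7, 5, 17]),
  (2, 89, 3, 0, 0, .X (.M [3, 4, 5, 89]) (.X (.M [8]) (.X (.M [3, 4, 5, 89]) (.M [4, 16, 5])))),
  (2, 89, 5, 0, 0, .X (.M [4]) (.X (.M [5, 3, 89]) (.M [8, 3, 5]))),
  (2, 89, 7, 0, 0, .M [3, 5, 17]),
  (2, 89, 11, 32, 89, .X (.M [11]) (.X (.M [11]) (.X (.M [11]) (.X (.M [11]) (.X (.Z (.M [4]) (.Z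
    .T (.M [11, 121, 1331, 89, 23, 67, 3631]))) (.M [4, 3, 5, 16, 11, 61, 32, 9, 7, 17, 64,
    241])))))),
  (2, 89, 13, 0, 0, .M [3, 5, 17, 7, 13]),
  (2, 89, 17, 0, 0, .X (.M [4]) (.X (.M [8]) (.X (.M [9]) (.X (.M [16, 3, 89]) (.M [16, 3, 32, 9,
    13]))))),
  (2, 89, 19, 0, 0, .M [3, 9, 19]),
  (2, 89, 23, 0, 0, .M [11]),
  (2, 89, 29, 0, 0, .M [3, 5, 7, 13]),
  (2, 89, 31, 0, 0, .M [3, 5, 11, 25, 31]),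
  (2, 89, 37, 0, 0, .M [3, 9, 7, 13]),
  (2, 89, 41, 0, 0, .M [5, 3, 7, 9, 13]),
  (2, 89, 43, 0, 0, .M [3, 11]),
  (2, 89, 47, 0, 0, .M [3, 17]),
  (2, 89, 53, 0, 0, .M [3, 9, 13, 5]),
  (2, 89, 59, 0, 0, .M [3, 5, 17]),
  (2, 89, 61, 0, 0, .M [3, 5, 9, 13]),
  (2, 89, 67, 0, 0, .M [11]),
  (2, 89, 71, 0, 0, .M [5, 3, 9, 7, 13, 73]),
  (2, 89, 73, 0, 0, .M [3, 9, 73]),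
  (2, 89, 79, 0, 0, .M [3, 5, 13, 7]),
  (2, 89, 83, 0, 0, .M [3, 5, 17]),
  (2, 89, 97, 8, 89, .X (.M [4]) (.X (.M [8]) (.X (.Z .T (.P [(97, 1, 16, 1), (9409, 1, 1552,
    1), (389, 1, 388, 97)])) (.M [16, 3])))),
  (2, 97, 3, 0, 0, .M [3, 7, 13, 73, 97]),
  (2, 97, 5, 0, 0, .M [3, 5, 7, 13, 97]),
  (2, 97, 7, 0, 0, .M [3]),
  (2, 97, 11, 0, 0, .M [3, 11]),
  (2, 97, 13, 0, 0, .M [3]),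
  (2, 97, 17, 0, 0, .M [3, 9, 7, 13, 5, 97]),
  (2, 97, 19, 0, 0, .M [3]),
  (2, 97, 23, 0, 0, .M [3, 7, 9, 13]),
  (2, 97, 29, 0, 0, .M [3, 7, 5, 13, 9]),
  (2, 97, 31, 0, 0, .M [3]),
  (2, 97, 37, 0, 0, .M [3]),
  (2, 97, 41, 0, 0, .M [3, 7]),
  (2, 97, 43, 0, 0, .M [3]),
  (2, 97, 47, 0, 0, .M [3, 7, 97]),
  (2, 97, 53, 0, 0, .M [3, 7, 13, 9]),
  (2, 97, 59, 0, 0, .M [3, 5, 7, 9, 13]),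
  (2, 97, 61, 0, 0, .M [3]),
  (2, 97, 67, 0, 0, .M [3]),
  (2, 97, 71, 0, 0, .M [3, 7, 9, 5, 73]),
  (2, 97, 73, 0, 0, .M [3]),
  (2, 97, 79, 0, 0, .M [3]),
  (2, 97, 83, 0, 0, .M [3, 7]),
  (2, 97, 89, 0, 0, .M [3, 5, 17])]

def tableB : List Entry := [
  (3, 7, 2, 9, 7, .Z (.M [3]) (.Z (.M [8, 7]) (.Z (.M [3]) (.Z (.X (.M [7]) (.X .T (.M [9, 27,
    37]))) (.M [3, 8, 16, 5, 32, 17]))))),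
  (3, 11, 2, 0, 0, .M [3, 5, 11, 61]),
  (3, 17, 2, 0, 0, .M [3, 5, 17, 41, 11, 25]),
  (3, 19, 2, 0, 0, .M [3, 5, 19]),
  (3, 23, 2, 9, 23, .Z (.M [3, 4, 5]) (.Z (.M [3, 4, 16, 5, 32, 11, 25, 31, 7, 37, 19, 109, 163,
    541, 1297, 64, 17, 97, 128, 256, 512, 257, 1024, 151, 101, 211, 29, 23, 67]) (.Z (.M [11]) (.Z
    (.M [13]) (.Z (.X (.M [11]) (.X .T (.M [3, 4, 16, 5, 32, 9, 7, 27, 73]))) (.M [8, 3, 16, 5,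
    32, 41, 11, 31, 61, 7, 64, 17, 241])))))),
  (3, 29, 2, 3, 29, .X (.Z (.M [4]) (.Z (.M [29]) (.Z (.M [7]) (.Z (.M [7]) (.Z .T (.M [8, 3, 5,
    16, 32, 64, 17])))))) (.M [3, 5, 7, 13, 9])),
  (3, 31, 2, 0, 0, .M [3, 5, 31]),
  (3, 37, 2, 27, 37, .X (.M [3, 9, 7, 27, 37]) (.X (.M [3, 19]) (.X (.Z (.M [3]) (.Z (.M [9]) (.Z
    (.M [3]) (.Z (.M [9]) (.Z (.M [3]) (.Z .T (.M [3, 8, 16, 5, 32, 64, 17, 128, 9, 7,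
    97]))))))) (.M [3, 9, 7, 27, 19, 37, 13, 5, 73, 81, 109, 163])))),
  (3, 41, 2, 0, 0, .M [3, 5, 41]),
  (3, 43, 2, 0, 0, .Z (.M [3]) (.Z (.M [7, 43]) (.M [8]))),
  (3, 47, 2, 81, 47, .Z (.M [3, 13]) (.Z (.X (.M [47]) (.M [3, 4, 16, 5, 32, 17, 9, 7])) (.Z (.M
    [23]) (.Z (.M [23]) (.Z (.M [61]) (.Z (.M [23]) (.Z (.X (.M [23]) (.X (.M [23]) (.X (.M [23])
    (.X .T (.M [3, 4, 16, 5, 32, 17, 9, 7, 97, 128, 27, 19, 81, 109, 243, 163]))))) (.M [8, 3,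
    16, 32, 5, 64, 17, 13, 7, 97, 128, 37, 19, 256, 577, 193, 769, 257])))))))),
  (3, 53, 2, 0, 0, .Z (.M [3, 8]) (.Z (.M [3, 4, 53]) (.M [4, 8, 3, 5]))),
  (3, 59, 2, 0, 0, .Z (.M [59]) (.Z (.X (.M [59]) (.M [3, 4, 5, 16, 9, 7])) (.M [8]))),
  (3, 61, 2, 3, 61, .X (.Z (.M [3]) (.Z (.M [61]) (.Z (.M [3]) (.Z (.M [5]) (.Z (.M [3]) (.Z .T
    (.M [3, 5, 8, 16, 32, 64, 17, 128, 257]))))))) (.M [3, 5, 9, 7])),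
  (3, 67, 2, 0, 0, .Z (.M [3]) (.Z (.M [67]) (.M [8]))),
  (3, 71, 2, 0, 0, .Z (.M [3, 4, 5]) (.Z (.M [3, 4, 5, 7, 13, 32, 73, 19, 109, 1297, 64, 17, 97,
    128, 193, 256, 512, 1024, 257, 41, 11, 271, 163, 601, 101, 71]) (.Z (.M [7]) (.M [8, 3, 16,
    5])))),
  (3, 73, 2, 0, 0, .M [3, 73, 13, 5]),
  (3, 79, 2, 0, 0, .Z (.M [3]) (.Z (.M [13, 79]) (.M [3, 8, 5]))),
  (3, 83, 2, 0, 0, .Z (.M [3, 8]) (.Z (.X (.M [83]) (.M [3, 4, 7, 13, 5, 41, 32, 17, 64, 9, 97]))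
    (.M [8]))),
  (3, 89, 2, 0, 0, .Z (.M [3, 4, 5]) (.Z (.M [3, 4, 5, 89]) (.M [8]))),
  (3, 97, 2, 0, 0, .M [3, 7, 13, 73, 97]),
  (5, 7, 2, 25, 7, .Z (.M [3, 4, 5]) (.Z (.M [3]) (.Z (.M [3, 4, 5, 13]) (.Z (.M [3]) (.Z (.X (.M
    [3]) (.X .T (.M [3, 4, 5, 16, 32, 7, 9, 19, 73, 64, 17, 128, 97, 193, 27, 512, 769, 257, 31,
    125]))) (.Z (.M [3]) (.M [4, 8, 3, 16, 5, 13, 32, 7, 19, 73, 64, 27, 17, 128, 97, 193]))))))),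
  (5, 11, 2, 5, 11, .Z (.M [5]) (.Z (.M [5]) (.Z (.M [5]) (.Z (.X .T (.M [4, 3, 11, 25, 71]))
    (.M [4, 8, 3, 5, 16, 13, 7, 9, 19, 27, 73, 32]))))),
  (5, 13, 2, 0, 0, .M [3, 13]),
  (5, 17, 2, 0, 0, .M [3, 5]),
  (5, 19, 2, 0, 0, .M [3, 5]),
  (5, 23, 2, 0, 0, .M [3, 5]),
  (5, 29, 2, 0, 0, .M [5, 3, 7, 31]),
  (5, 31, 2, 0, 0, .M [5, 3]),
  (5, 37, 2, 0, 0, .M [3, 5, 13, 7]),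
  (5, 41, 2, 0, 0, .M [5, 3, 41]),
  (5, 43, 2, 0, 0, .M [3, 7, 9, 43]),
  (5, 47, 2, 0, 0, .M [3, 5]),
  (5, 53, 2, 0, 0, .M [3, 5]),
  (5, 59, 2, 5, 59, .Z (.M [5]) (.Z (.M [29]) (.Z (.M [5]) (.Z (.M [29]) (.Z (.M [5]) (.Z (.X .T
    (.M [4, 3, 25, 11])) (.M [4, 8, 3, 5, 16, 13, 7, 31, 11, 181, 32, 241, 17, 64, 128, 97]))))))),
  (5, 61, 2, 0, 0, .M [5, 3]),
  (5, 67, 2, 0, 0, .M [3, 5, 17, 13, 7]),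
  (5, 71, 2, 0, 0, .M [5, 3, 7, 9]),
  (5, 73, 2, 0, 0, .M [3, 5, 13, 41]),
  (5, 79, 2, 0, 0, .M [3, 5]),
  (5, 83, 2, 0, 0, .M [3, 5]),
  (5, 89, 2, 0, 0, .M [5, 3, 17]),
  (5, 97, 2, 0, 0, .M [3, 5, 7, 31]),
  (7, 11, 2, 7, 121, .Z (.M [3, 4, 11]) (.Z (.M [3]) (.Z (.M [3, 4, 5, 16, 32, 7, 9, 37, 27, 73,
    64, 17, 97, 128, 193, 512, 257, 1024, 11, 61]) (.Z (.M [3]) (.Z (.M [19]) (.Z (.M [3]) (.Z (.X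
    .T (.M [3, 4, 5, 16, 32, 7, 9, 37, 27, 73, 64, 17, 97, 128, 193, 512, 257, 1024, 11, 541,
    81, 25, 125, 101, 625, 251, 43, 49])) (.M [8, 3, 16, 5, 32, 64, 17, 128, 256, 257,
    193])))))))),
  (7, 13, 2, 343, 169, .Y (.M [7]) (.Y (.Z (.M [7]) (.Z (.M [3]) (.Z (.M [16]) (.Z (.M [3]) (.Z
    (.M [7]) (.Z (.M [3]) (.Z (.M [7]) (.Z (.M [3]) (.Z .T (.M [3, 4, 32, 5, 64, 128, 17, 256,
    512, 1024, 257])))))))))) (.P [(7, 1, 2, 3), (29, 7, 14, 28), (3, 1, 1, 2), (113, 14, 56, 28),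
    (43, 6, 21, 14), (9, 3, 3, 6), (337, 56, 21, 21), (13, 12, 1, 12), (673, 112, 84, 48), (3361,
    168, 672, 168), (127, 126, 63, 7), (2689, 1344, 896, 224), (193, 24, 64, 96), (379, 378, 378,
    378), (81, 27, 27, 54), (2269, 567, 2268, 2268), (163, 162, 54, 162), (26881, 896, 960, 960),
    (71, 70, 70, 35), (2801, 5, 2800, 1400), (6301, 1575, 63, 2100), (7001, 875, 200, 500), (463,
    154, 42, 231), (2311, 110, 1155, 1155), (4733, 7, 182, 364), (1093, 273, 39, 364), (28393,
    2366, 12, 1183), (2197, 2028, 1, 2028)]))),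
  (7, 17, 2, 0, 0, .M [3, 9, 7, 19, 37, 109, 81, 5, 17]),
  (7, 19, 2, 0, 0, .M [3, 19]),
  (7, 23, 2, 0, 0, .Z (.M [3, 4, 7, 19]) (.Z (.M [3]) (.Z (.M [3, 4, 23]) (.M [16])))),
  (7, 29, 2, 0, 0, .M [7, 3, 5, 13, 9, 29]),
  (7, 31, 2, 0, 0, .M [3, 5, 7, 13, 19, 31]),
  (7, 37, 2, 0, 0, .M [3, 9, 37]),
  (7, 41, 2, 0, 0, .M [3, 7, 5, 41]),
  (7, 43, 2, 0, 0, .M [3, 7, 43, 9, 13]),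
  (7, 47, 2, 0, 0, .Z (.M [3, 4, 32, 5, 64, 17, 128, 7, 9, 13]) (.Z (.M [3]) (.Z (.X (.M [47]) (.M
    [3, 4, 32, 5, 64, 17, 128, 7, 9, 97, 256, 19, 27, 193, 512, 1024, 769, 257, 25, 11, 271, 81,
    125, 101, 251, 751, 43, 49])) (.M [16, 3])))),
  (7, 53, 2, 0, 0, .Z (.M [53]) (.Z (.M [3]) (.Z (.M [53]) (.M [4, 8, 3, 16, 5, 17])))),
  (7, 59, 2, 0, 0, .Z (.M [59]) (.Z (.M [3]) (.Z (.M [59]) (.M [8, 3, 16, 5, 17])))),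
  (7, 61, 2, 0, 0, .M [3, 5, 7, 13, 9, 61]),
  (7, 67, 2, 0, 0, .M [3, 7, 9, 31, 11, 13, 181, 19, 73, 41, 27, 17, 281, 43, 29, 113, 449, 193,
    97, 1153, 257, 641, 769, 109, 81, 811, 163, 487, 353, 67]),
  (7, 71, 2, 0, 0, .Z (.M [7]) (.Z (.M [7]) (.Z (.M [7, 71, 29]) (.M [16])))),
  (7, 73, 2, 0, 0, .M [3, 9, 73, 7, 181]),
  (7, 79, 2, 49, 79, .Z (.M [7, 43]) (.Z (.M [3]) (.Z (.M [7, 9, 79]) (.Z (.M [3]) (.Z (.M [43])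
    (.Z (.M [3]) (.Z (.X (.M [13]) (.X .T (.M [7, 9, 43, 4, 5, 19, 27, 37, 64, 128, 17, 97, 193,
    512, 1024, 1153, 257, 769, 25, 11, 271, 81, 811, 163, 125, 101, 625, 251, 281, 343]))) (.M [3,
    16, 32, 5, 13, 7, 43, 19, 27, 37, 64, 128, 17, 256, 97])))))))),
  (7, 83, 2, 0, 0, .Z (.M [7]) (.Z (.M [3]) (.Z (.M [83]) (.M [8, 3, 16, 7, 5, 17])))),
  (7, 89, 2, 0, 0, .Z (.M [3, 4, 5, 32, 7, 13]) (.Z (.M [3]) (.Z (.M [3, 4, 5, 89]) (.M [4, 16,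
    3])))),
  (7, 97, 2, 0, 0, .M [3, 7, 9, 19, 37, 73, 97]),
  (11, 13, 2, 0, 0, .M [3, 13]),
  (11, 17, 2, 0, 0, .M [3, 11]),
  (11, 19, 2, 0, 0, .M [3, 19]),
  (11, 23, 2, 0, 0, .M [11, 3, 5, 61]),
  (11, 29, 2, 0, 0, .M [5, 11]),
  (11, 31, 2, 0, 0, .M [5, 11]),
  (11, 37, 2, 0, 0, .M [3, 11]),
  (11, 41, 2, 0, 0, .M [5, 3, 11]),
  (11, 43, 2, 0, 0, .M [3, 7, 9, 19, 27, 37, 11]),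
  (11, 47, 2, 0, 0, .M [3, 5, 17, 11]),
  (11, 53, 2, 11, 53, .Z (.M [11]) (.Z (.M [4, 13]) (.Z (.M [11]) (.Z (.M [5]) (.Z (.M [11]) (.Z
    (.X .T (.M [4, 3, 5, 16, 9, 7, 19, 27, 81, 109, 163, 32, 73, 17, 64, 128, 577, 193, 257,
    512, 1024, 11, 25, 281, 29, 121, 23])) (.M [4, 8, 3, 5, 16, 13, 7, 19, 27, 73, 17, 64, 97,
    128, 577]))))))),
  (11, 59, 2, 0, 0, .M [5, 11]),
  (11, 61, 2, 0, 0, .M [5, 3, 61]),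
  (11, 67, 2, 0, 0, .M [3, 11]),
  (11, 71, 2, 0, 0, .M [5, 11]),
  (11, 73, 2, 0, 0, .M [3, 5, 37, 73]),
  (11, 79, 2, 0, 0, .M [3, 5, 11]),
  (11, 83, 2, 0, 0, .M [3, 11]),
  (11, 89, 2, 0, 0, .M [5, 11]),
  (11, 97, 2, 0, 0, .M [3, 11]),
  (13, 17, 2, 0, 0, .M [3, 17]),
  (13, 19, 2, 13, 19, .Z (.M [4, 13]) (.Z (.M [3]) (.Z (.M [4, 7]) (.Z (.M [3]) (.Z (.X .T (.M
    [169])) (.M [3, 4, 8, 5, 16, 17, 32, 64, 7, 241])))))),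
  (13, 23, 2, 0, 0, .M [3, 13]),
  (13, 29, 2, 0, 0, .M [3, 13]),
  (13, 31, 2, 0, 0, .M [3, 5, 13, 7]),
  (13, 37, 2, 0, 0, .M [3, 7, 13]),
  (13, 41, 2, 0, 0, .M [3, 7, 13]),
  (13, 43, 2, 0, 0, .M [3, 7, 13]),
  (13, 47, 2, 0, 0, .M [3, 13]),
  (13, 53, 2, 0, 0, .M [3, 13]),
  (13, 59, 2, 0, 0, .M [3, 13]),
  (13, 61, 2, 0, 0, .M [3, 13]),
  (13, 67, 2, 0, 0, .M [3, 7, 13]),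
  (13, 71, 2, 0, 0, .M [3, 7, 13]),
  (13, 73, 2, 0, 0, .M [3, 13, 5]),
  (13, 79, 2, 0, 0, .M [3, 13]),
  (13, 83, 2, 0, 0, .M [3, 13]),
  (13, 89, 2, 0, 0, .M [3, 13]),
  (13, 97, 2, 0, 0, .M [3, 7, 13]),
  (17, 19, 2, 0, 0, .M [3, 9, 19]),
  (17, 23, 2, 0, 0, .M [3, 5, 17, 13]),
  (17, 29, 2, 0, 0, .M [3, 29]),
  (17, 31, 2, 0, 0, .M [3, 5, 17, 13, 7]),
  (17, 37, 2, 0, 0, .M [3, 9, 7, 27, 37]),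
  (17, 41, 2, 0, 0, .M [3, 5, 29, 17]),
  (17, 43, 2, 0, 0, .M [3, 7, 9, 13, 17]),
  (17, 47, 2, 17, 47, .Z (.M [17]) (.Z (.M [8]) (.Z (.M [16]) (.Z (.M [4, 17]) (.Z (.M [17]) (.Z
    (.X .T (.M [17, 289, 307])) (.M [4, 32, 3, 64, 5, 17, 13, 7, 37, 19, 109, 81, 73,
    128]))))))),
  (17, 53, 2, 0, 0, .M [3, 17]),
  (17, 59, 2, 0, 0, .M [3, 17]),
  (17, 61, 2, 0, 0, .M [3, 5, 17, 29, 113]),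
  (17, 67, 2, 0, 0, .M [3, 17]),
  (17, 71, 2, 0, 0, .M [3, 9, 7, 5, 13, 17]),
  (17, 73, 2, 0, 0, .M [3, 9, 73]),
  (17, 79, 2, 0, 0, .M [3, 13, 7, 5, 73, 17]),
  (17, 83, 2, 0, 0, .M [3, 17]),
  (17, 89, 2, 0, 0, .M [3, 9, 5, 17]),
  (17, 97, 2, 0, 0, .M [3, 7, 9, 13, 17]),
  (19, 23, 2, 0, 0, .M [3, 5, 17, 19]),
  (19, 29, 2, 0, 0, .M [3, 5, 7, 19]),
  (19, 31, 2, 0, 0, .M [3, 5, 9, 19, 7]),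
  (19, 37, 2, 0, 0, .M [3, 9, 19]),
  (19, 41, 2, 0, 0, .M [3, 5, 7, 19]),
  (19, 43, 2, 0, 0, .M [3, 7, 19]),
  (19, 47, 2, 0, 0, .M [3, 5, 17, 13, 7, 19]),
  (19, 53, 2, 0, 0, .M [3, 9, 19]),
  (19, 59, 2, 0, 0, .M [3, 5, 19]),
  (19, 61, 2, 0, 0, .M [3, 5, 19]),
  (19, 67, 2, 0, 0, .M [3, 9, 7, 19]),
  (19, 71, 2, 0, 0, .M [3, 9, 19]),
  (19, 73, 2, 0, 0, .M [3, 9, 19]),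
  (19, 79, 2, 0, 0, .M [3, 5, 13, 7, 19]),
  (19, 83, 2, 0, 0, .M [3, 19]),
  (19, 89, 2, 0, 0, .M [3, 9, 19]),
  (19, 97, 2, 0, 0, .M [3, 9, 19, 27, 7, 13]),
  (23, 29, 2, 0, 0, .M [7, 3, 13, 5, 37, 19, 73, 109, 271, 81, 11, 25, 151, 241, 17, 97, 577, 193,
    257, 673, 29]),
  (23, 31, 2, 0, 0, .Z (.M [3, 4, 5, 64, 11, 25, 31]) (.Z (.M [3]) (.Z (.M [11]) (.Z (.M [3]) (.Z
    (.M [3, 4, 5, 64, 11, 25, 13, 128, 7, 19, 27, 73, 17, 97, 193, 512, 1024, 109, 81, 257, 151,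
    101, 49, 29, 343, 197, 243, 331, 67, 23]) (.M [16, 3, 32, 5, 64, 13, 17])))))),
  (23, 37, 2, 0, 0, .M [3, 9, 37]),
  (23, 41, 2, 23, 41, .Z (.M [41]) (.Z (.M [8]) (.Z (.M [41]) (.Z (.M [5]) (.Z (.M [7]) (.Z (.X
    .T (.M [23, 529, 461])) (.M [4, 16, 3, 5, 32, 7, 9, 37, 19, 64, 128, 17, 97]))))))),
  (23, 43, 2, 0, 0, .M [3, 7, 9, 13, 5, 37, 11, 25, 31, 151, 73, 19, 631, 43]),
  (23, 47, 2, 0, 0, .Z (.M [23]) (.M [23, 4, 3])),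
  (23, 53, 2, 0, 0, .M [3, 13, 53]),
  (23, 59, 2, 0, 0, .Z (.M [3, 5, 16, 32, 17, 64, 128, 11, 25, 31, 193, 256, 7, 37, 19, 1153, 257,
    109, 81, 1024, 601, 101, 29, 43, 243, 353, 67, 23]) (.M [4, 3])),
  (23, 61, 2, 0, 0, .M [3, 5, 61]),
  (23, 67, 2, 0, 0, .Z (.M [67]) (.Z (.M [11]) (.M [8, 3]))),
  (23, 71, 2, 0, 0, .Z (.M [71]) (.M [7, 4, 9])),
  (23, 73, 2, 0, 0, .M [3, 9, 13, 73]),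
  (23, 79, 2, 0, 0, .M [3, 13, 79]),
  (23, 83, 2, 0, 0, .Z (.M [3, 16, 5, 32, 7, 9, 19, 27, 109, 81, 163, 243, 1297, 64, 17, 128, 97,
    256, 512, 257, 1024, 11, 25, 151, 101, 751, 251, 23, 67]) (.M [4, 3])),
  (23, 89, 2, 0, 0, .Z (.M [4, 3, 5, 32, 9, 7, 27, 19, 81, 109, 163, 243, 17, 64, 128, 97, 256,
    193, 512, 257, 1024, 181, 25, 151, 101, 211, 29, 23, 67]) (.M [4, 3, 11])),
  (23, 97, 2, 0, 0, .M [3, 7, 9, 13, 5, 97]),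
  (29, 31, 2, 0, 0, .Z (.M [3, 4, 29]) (.Z (.M [3]) (.Z (.M [5]) (.Z (.M [3]) (.Z (.M [3, 4, 16,
    32, 64, 7, 9, 13, 128, 19, 27, 73, 17, 256, 193, 512, 1024, 257, 31, 541, 81, 163, 243, 487,
    11, 401, 101, 29, 421]) (.M [4, 8, 3, 5, 16, 32, 64, 7, 9, 13, 37, 19, 27, 73, 17, 97])))))),
  (29, 37, 2, 0, 0, .M [3, 7, 9, 37]),
  (29, 41, 2, 0, 0, .M [7, 3, 29]),
  (29, 43, 2, 0, 0, .M [7, 3, 5, 37, 9, 19, 109, 73, 17, 97, 193, 81, 313, 181, 31, 271, 241, 631,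
    43]),
  (29, 47, 2, 0, 0, .M [3, 5, 13, 7, 37, 61, 17, 19, 73, 97, 109, 81, 271, 11, 631, 577, 193, 257,
    151, 101, 251, 163, 243, 49, 29]),
  (29, 53, 2, 0, 0, .M [7, 3, 9, 13, 5, 37, 19, 73, 17, 109, 81, 163, 97, 577, 193, 673, 29]),
  (29, 59, 2, 0, 0, .M [29, 5]),
  (29, 61, 2, 0, 0, .M [3, 5, 7, 61]),
  (29, 67, 2, 0, 0, .M [3, 7, 9, 67]),
  (29, 71, 2, 0, 0, .M [7, 5, 3, 9, 13, 37, 19, 73, 109, 81, 61, 271, 11, 41, 241, 17, 97, 577,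
    193, 641, 257, 673, 29]),
  (29, 73, 2, 0, 0, .M [3, 5, 13, 7, 37, 73]),
  (29, 79, 2, 0, 0, .M [3, 5, 13, 7, 37, 19, 73, 109, 81, 61, 11, 41, 241, 811, 17, 97, 631, 43,
    29]),
  (29, 83, 2, 0, 0, .M [7, 3, 5, 13, 9, 19, 27, 37, 73, 17, 109, 81, 271, 41, 811, 11, 401, 163,
    487, 331, 881, 23, 97, 193, 577, 673, 29]),
  (29, 89, 2, 0, 0, .M [3, 5, 7, 9, 13, 17, 37, 19, 109, 81, 97, 241, 11, 25, 673, 29]),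
  (29, 97, 2, 0, 0, .M [3, 7, 5, 13, 37, 97]),
  (31, 37, 2, 0, 0, .M [3, 31, 5, 37, 13]),
  (31, 41, 2, 0, 0, .M [5, 3, 41]),
  (31, 43, 2, 0, 0, .Z (.M [43]) (.Z (.M [3]) (.Z (.M [7]) (.Z (.M [3]) (.Z (.M [43]) (.Z (.M [3])
    (.M [3, 8, 16, 5, 32, 64, 7, 9, 13, 128, 37, 19, 27, 73, 109, 17, 97, 193, 81, 163, 243, 487,
    769, 257]))))))),
  (31, 47, 2, 0, 0, .Z (.M [3, 4, 5, 13, 128, 37, 7, 19, 27, 73, 17, 256, 512, 577, 193, 31, 11,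
    25]) (.Z (.M [3]) (.Z (.M [16]) (.Z (.M [3]) (.Z (.Y (.M [3]) (.P [(47, 46, 1, 1), (2209,
    2162, 1, 1), (659, 94, 94, 1)])) (.M [32, 3, 64, 5])))))),
  (31, 53, 2, 0, 0, .Z (.M [3, 4, 5, 13, 32, 64, 128, 9, 7, 409, 17, 256, 193, 512, 1024, 19, 27,
    81, 109, 243, 729, 257, 31, 541]) (.Z (.M [3]) (.Z (.M [13]) (.Z (.M [3]) (.Z (.Y (.M [3]) (.P
    [(53, 52, 1, 1), (2809, 2756, 1, 1), (107, 106, 53, 1), (1061, 106, 265, 1)])) (.M [4, 8, 3,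
    16, 5, 32, 64, 13, 9, 7, 17, 97])))))),
  (31, 59, 2, 0, 0, .Z (.M [3, 4, 16, 32, 64, 17, 128, 256, 512, 13, 7, 193, 1024, 19, 27, 163,
    81, 257, 31, 641]) (.Z (.M [3]) (.Z (.M [5]) (.Z (.M [3]) (.Z (.Y (.M [3]) (.P [(59, 58, 1,
    1), (3481, 3422, 1, 1), (3541, 590, 3, 1)])) (.Z (.M [3]) (.M [8, 3, 5, 16, 32, 64, 17, 128,
    13, 97]))))))),
  (31, 61, 2, 0, 0, .M [3, 5, 31, 11, 41, 61]),
  (31, 67, 2, 0, 0, .Z (.M [31]) (.Z (.M [3]) (.Z (.M [31]) (.Z (.M [3]) (.Z (.M [31, 9, 7, 4, 5,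
    13, 32, 64, 128, 19, 27, 73, 17, 193, 256, 512, 1024, 257, 11, 25, 271, 81, 163, 243, 487,
    729, 281, 29, 67, 353]) (.M [3, 8, 16, 5, 32, 64, 31, 11, 25, 13, 7, 181, 19, 27, 73, 17,
    97])))))),
  (31, 71, 2, 0, 0, .Z (.M [3, 4, 32, 64, 7, 577, 128, 13, 19, 73, 17, 97, 512, 193, 1024, 81, 31,
    541]) (.Z (.M [5]) (.Z (.M [5]) (.Z (.M [5]) (.Z (.M [3, 4, 32, 64, 7, 13, 128, 19, 27, 73,
    17, 97, 512, 193, 1024, 81, 31, 641, 257, 11, 271, 163, 243, 729, 487, 601, 101, 49, 29, 71])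
    (.Z (.M [5]) (.M [5, 3, 4, 32, 64, 7, 13, 128, 17]))))))),
  (31, 73, 2, 0, 0, .M [3, 5, 13, 9, 73]),
  (31, 79, 2, 0, 0, .Z (.M [5, 4, 13, 64, 128, 41, 11, 31]) (.Z (.M [3]) (.Z (.M [5]) (.Z (.M [3])
    (.Z (.Y (.M [5]) (.M [79, 6241])) (.Z (.M [3]) (.M [3, 5, 4, 64, 13, 128, 17]))))))),
  (31, 83, 2, 0, 0, .Z (.M [3, 4, 5, 13, 32, 64, 128, 7, 9, 37, 27, 73, 17, 193, 256, 512, 1024,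
    257, 31, 331]) (.Z (.M [3]) (.Z (.M [41]) (.Z (.M [3]) (.Z (.M [83]) (.M [8, 3, 16, 5, 32, 64,
    13, 7, 9, 19, 37, 27, 73, 17, 97])))))),
  (31, 89, 2, 0, 0, .Z (.M [3, 4, 32, 64, 9, 7, 13, 128, 19, 27, 73, 17, 256, 512, 193, 1024, 81,
    109, 163, 243, 729, 487, 257, 11, 25, 31]) (.Z (.M [3]) (.Z (.M [5]) (.Z (.M [3]) (.Z (.M [89,
    4]) (.Z (.M [3]) (.M [4, 16, 3, 5, 32, 64, 17, 128, 13, 97]))))))),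
  (31, 97, 2, 31, 97, .Z (.M [4, 97]) (.Z (.M [3]) (.Z (.M [16]) (.Z (.M [3]) (.Z (.M [4, 64, 5,
    128, 7, 97]) (.Z (.M [3]) (.Z (.Y .T (.P [(97, 48, 1, 1), (9409, 4656, 1, 1), (389, 388, 97,
    1)])) (.Z (.M [3]) (.M [3, 4, 64, 5, 128, 37, 7, 19, 27, 73, 256, 512, 17]))))))))),
  (37, 41, 2, 0, 0, .M [3, 7, 9, 37]),
  (37, 43, 2, 0, 0, .M [3, 7, 37]),
  (37, 47, 2, 0, 0, .M [3, 37]),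
  (37, 53, 2, 0, 0, .M [3, 9, 7, 37]),
  (37, 59, 2, 0, 0, .Z (.M [3, 37]) (.M [4, 3])),
  (37, 61, 2, 0, 0, .M [3, 5, 31, 61]),
  (37, 67, 2, 0, 0, .M [3, 9, 7, 67]),
  (37, 71, 2, 0, 0, .M [3, 9, 7, 37]),
  (37, 73, 2, 0, 0, .M [3, 9, 37]),
  (37, 79, 2, 0, 0, .M [3, 9, 7, 13, 5, 37]),
  (37, 83, 2, 0, 0, .M [3, 7, 9, 37]),
  (37, 89, 2, 0, 0, .M [3, 9, 7, 27, 37]),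
  (37, 97, 2, 0, 0, .M [3, 7, 9, 67, 37]),
  (41, 43, 2, 0, 0, .M [3, 7, 43]),
  (41, 47, 2, 0, 0, .M [3, 5, 17, 13, 7, 37, 19, 73, 41]),
  (41, 53, 2, 0, 0, .M [3, 5, 7, 9, 13, 41]),
  (41, 59, 2, 0, 0, .M [5, 41]),
  (41, 61, 2, 0, 0, .M [5, 3, 61]),
  (41, 67, 2, 0, 0, .M [3, 7, 9, 31, 5, 41]),
  (41, 71, 2, 0, 0, .M [5, 3, 7, 9, 13, 109, 19, 41]),
  (41, 73, 2, 0, 0, .M [3, 5, 41, 7, 13]),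
  (41, 79, 2, 0, 0, .M [3, 5, 7, 9, 13, 41, 17]),
  (41, 83, 2, 0, 0, .M [7, 3, 41]),
  (41, 89, 2, 0, 0, .M [5, 3, 7, 9, 13, 17, 241, 41]),
  (41, 97, 2, 0, 0, .M [3, 7, 5, 41]),
  (43, 47, 2, 0, 0, .M [3, 7, 9, 43]),
  (43, 53, 2, 0, 0, .Z (.M [43]) (.Z (.M [3]) (.M [4, 8, 3]))),
  (43, 59, 2, 0, 0, .M [3, 7, 9, 43]),
  (43, 61, 2, 0, 0, .M [3, 5, 7, 13, 9, 61]),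
  (43, 67, 2, 0, 0, .M [3, 7, 9, 11, 31, 13, 5, 17, 25, 41, 241, 97, 193, 37, 19, 109, 1153, 631,
    43]),
  (43, 71, 2, 0, 0, .M [7, 3, 9, 5, 13, 37, 73, 19, 17, 97, 193, 81, 1153, 257, 181, 31, 271, 631,
    43]),
  (43, 73, 2, 0, 0, .M [3, 7, 9, 73]),
  (43, 79, 2, 0, 0, .M [3, 43]),
  (43, 83, 2, 0, 0, .M [3, 7, 9, 19, 27, 37, 5, 109, 73, 17, 97, 193, 81, 181, 31, 271, 241, 631,
    43]),
  (43, 89, 2, 0, 0, .M [3, 7, 9, 11, 5, 13, 17, 25, 31, 41, 97, 241, 193, 27, 19, 109, 631, 43]),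
  (43, 97, 2, 0, 0, .M [3, 7, 43]),
  (47, 53, 2, 0, 0, .Z (.M [53]) (.Z (.M [13]) (.M [4, 8, 3]))),
  (47, 59, 2, 0, 0, .Z (.Y (.M [23]) (.P [(59, 58, 1, 1), (3481, 3422, 1, 1), (3541, 885, 3, 1)]))
    (.M [4, 3])),
  (47, 61, 2, 0, 0, .M [3, 5, 13, 61]),
  (47, 67, 2, 0, 0, .Z (.M [3, 4, 16, 5, 32, 64, 13, 7, 37, 19, 73, 97, 256, 193, 512, 1024, 769,
    257, 11, 25, 271, 81, 811, 163, 49, 29, 343, 197, 23, 67]) (.Z (.M [3]) (.M [8, 3]))),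
  (47, 71, 2, 0, 0, .M [3, 5, 17, 13, 7, 37, 19, 73, 109, 81, 97, 577, 193, 1153, 257, 61, 11,
    271, 631, 243, 163, 151, 101, 251, 751, 49, 29, 71]),
  (47, 73, 2, 0, 0, .M [3, 9, 37, 73]),
  (47, 79, 2, 0, 0, .Z (.Y (.M [23]) (.P [(79, 78, 1, 1), (6241, 6162, 1, 1), (317, 316, 79, 1)]))
    (.M [3, 4, 5, 13])),
  (47, 83, 2, 0, 0, .Z (.X (.M [41]) (.M [47, 2209, 659, 941])) (.M [4, 3])),
  (47, 89, 2, 0, 0, .Z (.M [4, 3, 5, 17, 64, 9, 7, 27, 19, 73, 97, 81, 109, 243, 163, 256, 512,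
    193, 1024, 769, 257, 11, 25, 281, 29, 23, 67, 89]) (.M [4, 3, 17])),
  (47, 97, 2, 0, 0, .M [3, 7, 97]),
  (53, 59, 2, 0, 0, .Z (.M [53]) (.M [4, 3, 5, 17, 13, 9])),
  (53, 61, 2, 0, 0, .M [3, 5, 13, 61]),
  (53, 67, 2, 0, 0, .Z (.M [67]) (.Z (.M [3]) (.M [4, 8, 3]))),
  (53, 71, 2, 0, 0, .M [7, 9, 5, 13, 27, 19, 73, 81, 109, 17, 577, 97, 193, 1153, 257, 243, 163,
    241, 11, 151, 101, 251, 751, 71]),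
  (53, 73, 2, 0, 0, .M [3, 9, 13, 5, 7, 73]),
  (53, 79, 2, 0, 0, .Z (.M [3, 4, 53]) (.M [4, 3, 5, 13])),
  (53, 83, 2, 0, 0, .M [3, 7, 13, 53]),
  (53, 89, 2, 0, 0, .M [3, 9, 5, 13, 17, 7, 27, 19, 81, 109, 243, 163, 433, 97, 241, 11, 25, 281,
    131, 53]),
  (53, 97, 2, 0, 0, .M [3, 7, 9, 13, 5, 97]),
  (59, 61, 2, 0, 0, .M [3, 5, 13, 9, 61]),
  (59, 67, 2, 0, 0, .M [3, 5, 17, 11, 41, 31, 7, 181, 151, 601, 101, 401, 97, 193, 577, 257, 641,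
    19, 433, 109, 81, 811, 163, 243, 353, 67]),
  (59, 71, 2, 0, 0, .M [5, 3, 7, 13, 17, 577, 97, 27, 19, 109, 81, 193, 673, 29, 43, 379, 1153,
    257, 163, 243, 71]),
  (59, 73, 2, 0, 0, .M [3, 5, 41, 11, 25, 31, 7, 13, 151, 37, 73]),
  (59, 79, 2, 0, 0, .Z (.M [59]) (.M [3, 4, 5])),
  (59, 83, 2, 0, 0, .Z (.M [8, 59]) (.M [4, 3])),
  (59, 89, 2, 0, 0, .Z (.M [4, 3, 16, 9, 7, 13, 17, 27, 19, 81, 109, 163, 243, 64, 433, 97, 193,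
    256, 512, 257, 1024, 11, 25, 151, 101, 29, 43, 89, 23]) (.Z (.M [5]) (.M [8]))),
  (59, 97, 2, 0, 0, .M [3, 5, 7, 9, 13, 37, 73, 97]),
  (61, 67, 2, 61, 67, .Z (.M [4, 61]) (.Z (.M [3]) (.Z (.M [31]) (.Z (.M [3]) (.Z (.M [31]) (.Z
    (.M [3]) (.Z (.X .T (.P [(61, 1, 60, 1), (3721, 1, 3660, 1), (977, 61, 61, 1)])) (.M [3, 4,
    8, 5, 16, 17, 32, 64, 31, 11, 25, 61, 7, 97, 128, 193, 256, 257])))))))),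
  (61, 71, 2, 0, 0, .M [5, 3, 7, 13, 61]),
  (61, 73, 2, 0, 0, .M [3, 5, 13, 9, 7, 73]),
  (61, 79, 2, 0, 0, .M [3, 5, 13, 9, 7, 61]),
  (61, 83, 2, 0, 0, .M [3, 5, 13, 7, 9, 61]),
  (61, 89, 2, 0, 0, .M [3, 5, 9, 7, 13, 61]),
  (61, 97, 2, 0, 0, .M [3, 5, 97]),
  (67, 71, 2, 0, 0, .M [3, 7, 5, 13, 17, 31, 25, 41, 181, 27, 19, 109, 81, 271, 243, 163, 487,
    937, 97, 577, 193, 1153, 257, 641, 449, 49, 29, 71]),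
  (67, 73, 2, 0, 0, .M [3, 9, 7, 73]),
  (67, 79, 2, 0, 0, .M [3, 7, 13, 5, 49, 43, 29, 337, 113, 17, 97, 343, 193, 257, 1153, 433, 19,
    109, 81, 937, 79]),
  (67, 83, 2, 0, 0, .M [3, 7, 9, 19, 27, 37, 5, 73, 17, 109, 81, 31, 25, 41, 811, 163, 487, 331,
    881, 23, 67]),
  (67, 89, 2, 0, 0, .Z (.M [67]) (.Z (.M [11]) (.M [8]))),
  (67, 97, 2, 0, 0, .M [3, 7, 9, 67, 13]),
  (71, 73, 2, 0, 0, .M [3, 9, 7, 5, 13, 73]),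
  (71, 79, 2, 0, 0, .M [3, 5, 7, 13, 27, 19, 37, 109, 81, 937, 79]),
  (71, 83, 2, 0, 0, .M [7, 3, 9, 5, 13, 19, 73, 27, 109, 81, 17, 577, 97, 193, 257, 41, 271, 11,
    211, 71]),
  (71, 89, 2, 0, 0, .Z (.M [4, 3, 7, 27, 13, 17, 64, 128, 97, 256, 193, 1024, 257, 11, 181, 19,
    109, 243, 25, 601, 101, 71]) (.M [4, 3, 5])),
  (71, 97, 2, 0, 0, .M [3, 7, 9, 5, 13, 97]),
  (73, 79, 2, 0, 0, .M [3, 13, 5, 9, 73]),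
  (73, 83, 2, 0, 0, .M [3, 73, 7]),
  (73, 89, 2, 0, 0, .M [3, 9, 5, 13, 73]),
  (73, 97, 2, 0, 0, .M [3, 9, 73, 37]),
  (79, 83, 2, 0, 0, .Z (.X (.M [41]) (.P [(79, 1, 39, 1), (6241, 1, 3081, 1), (317, 79, 158, 1),
    (2371, 474, 79, 1)])) (.M [3, 4, 5, 13])),
  (79, 89, 2, 0, 0, .Z (.M [79]) (.M [4, 3, 5])),
  (79, 97, 2, 0, 0, .M [3, 7, 9, 13, 5, 97]),
  (83, 89, 2, 0, 0, .M [3, 5, 17, 13, 7, 9, 19, 27, 109, 81, 241, 11, 25, 811, 243, 163, 97, 193,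
    331, 881, 23, 89]),
  (83, 97, 2, 0, 0, .M [3, 7, 5, 13, 73, 9, 97]),
  (89, 97, 2, 0, 0, .M [3, 5, 7, 97])]

def oddPrimes : List ℕ :=
  [3, 5, 7, 11, 13, 17, 19, 23, 29, 31, 37, 41, 43, 47, 53, 59, 61, 67, 71, 73, 79, 83, 89, 97]

def exceptions : List (ℕ × ℕ × ℕ) :=
  [(2, 3, 5), (2, 3, 11), (2, 5, 3), (2, 7, 3), (3, 5, 2), (3, 13, 2)]

def keysA : List (ℕ × ℕ × ℕ) :=
  (oddPrimes.flatMap fun b => oddPrimes.map fun c => (2, b, c)).filter fun k =>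
    k.2.1 ≠ k.2.2 ∧ k ∉ exceptions

def keysB : List (ℕ × ℕ × ℕ) :=
  (oddPrimes.flatMap fun a => oddPrimes.map fun b => (a, b, 2)).filter fun k =>
    k.1 < k.2.1 ∧ k ∉ exceptions

theorem tableA_ok : tableA.all Entry.ok = true := by decide +kernel

theorem tableB_ok : tableB.all Entry.ok = true := by decide +kernel

theorem tableA_keys : tableA.map Entry.key = keysA := by decide +kernel

theorem tableB_keys : tableB.map Entry.key = keysB := by decide +kernel

theorem uniq_of_mem {l : List Entry} (h : l.all Entry.ok = true) {k : ℕ × ℕ × ℕ}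
    (hk : k ∈ l.map Entry.key) : Uniq k := by
  obtain ⟨e, he, rfl⟩ := List.mem_map.mp hk
  exact uniq_of_ok (List.all_eq_true.mp h e he)

theorem mem_oddPrimes {p : ℕ} (hp : p.Prime) (h2 : p ≠ 2) (h : p < 100) : p ∈ oddPrimes := by
  have key : ∀ p ∈ List.range 100, p ∈ oddPrimes ∨ p = 2 ∨ p = 0 ∨ p = 1 ∨
      p % 2 = 0 ∨ (p ≠ 3 ∧ p % 3 = 0) ∨ (p ≠ 5 ∧ p % 5 = 0) ∨ (p ≠ 7 ∧ p % 7 = 0) := by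
    decide +kernel
  by_contra hn
  have hd : ∀ q, q ≠ 1 → p % q = 0 → q = p := fun q hq hm =>
    ((Nat.dvd_prime hp).mp (Nat.dvd_of_mod_eq_zero hm)).resolve_left hq
  rcases key p (List.mem_range.mpr h) with
    h' | h' | h' | h' | h' | ⟨h1, h'⟩ | ⟨h1, h'⟩ | ⟨h1, h'⟩
  · exact hn h'
  · exact h2 h'
  · exact hp.ne_zero h'
  · exact hp.ne_one h'
  · exact h2 (hd 2 (by norm_num) h').symm
  · exact h1 (hd 3 (by norm_num) h').symm
  · exact h1 (hd 5 (by norm_num) h').symm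
  · exact h1 (hd 7 (by norm_num) h').symm

end PillaiCert

open PillaiCert in
/-- Lemma 2.9: Conjecture 1.7 holds for distinct primes `a < b` with
`max{a,b,c} < 100`: outside the six exceptional triples there is at most one
solution of `a^x + b^y = c^z` in positive integers. -/
theorem stmt_14 (a b c : ℕ) (ha : Nat.Prime a) (hb : Nat.Prime b) (hc : Nat.Prime c)
    (hab : a < b) (hac : a ≠ c) (hbc : b ≠ c)
    (hmax : max a (max b c) < 100)
    (hexc : (a, b, c) ≠ (2, 3, 5) ∧ (a, b, c) ≠ (2, 3, 11) ∧ (a, b, c) ≠ (2, 5, 3) ∧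
        (a, b, c) ≠ (2, 7, 3) ∧ (a, b, c) ≠ (3, 5, 2) ∧ (a, b, c) ≠ (3, 13, 2)) :
    ∀ s t : ℕ × ℕ × ℕ,
        (0 < s.1 ∧ 0 < s.2.1 ∧ 0 < s.2.2 ∧ a ^ s.1 + b ^ s.2.1 = c ^ s.2.2) →
        (0 < t.1 ∧ 0 < t.2.1 ∧ 0 < t.2.2 ∧ a ^ t.1 + b ^ t.2.1 = c ^ t.2.2) →
        s = t := by
  rintro ⟨x, y, z⟩ ⟨x', y', z'⟩ ⟨hx, hy, hz, h⟩ ⟨hx', hy', hz', h'⟩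
  simp only at hx hy hz h hx' hy' hz' h'
  have hA : a < 100 := lt_of_le_of_lt (le_max_left _ _) hmax
  have hB : b < 100 := lt_of_le_of_lt ((le_max_left _ _).trans (le_max_right _ _)) hmax
  have hC : c < 100 := lt_of_le_of_lt ((le_max_right _ _).trans (le_max_right _ _)) hmax
  have hb2 : b ≠ 2 := by have := ha.two_le; omega
  have hex : (a, b, c) ∉ exceptions := by
    obtain ⟨h1, h2, h3, h4, h5, h6⟩ := hexc
    simp only [exceptions, List.mem_cons, List.not_mem_nil, or_false, not_or]
    exact ⟨h1, h2, h3, h4, h5, h6⟩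
  have hu : Uniq (a, b, c) := by
    by_cases ha2 : a = 2
    · have hc2 : c ≠ 2 := fun hc2 => hac (ha2.trans hc2.symm)
      apply uniq_of_mem tableA_ok
      rw [tableA_keys, keysA, List.mem_filter]
      refine ⟨List.mem_flatMap.mpr ⟨b, mem_oddPrimes hb hb2 hB,
        List.mem_map.mpr ⟨c, mem_oddPrimes hc hc2 hC, by rw [ha2]⟩⟩, ?_⟩
      exact decide_eq_true ⟨hbc, hex⟩
    · by_cases hc2 : c = 2
      · apply uniq_of_mem tableB_ok
        rw [tableB_keys, keysB, List.mem_filter]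
        refine ⟨List.mem_flatMap.mpr ⟨a, mem_oddPrimes ha ha2 hA,
          List.mem_map.mpr ⟨b, mem_oddPrimes hb hb2 hB, by rw [hc2]⟩⟩, ?_⟩
        exact decide_eq_true ⟨hab, hex⟩
      · exfalso
        have o1 : Odd (a ^ x) := (ha.odd_of_ne_two ha2).pow
        have o2 : Odd (b ^ y) := (hb.odd_of_ne_two hb2).pow
        have o3 : Odd (c ^ z) := (hc.odd_of_ne_two hc2).pow
        have e := o1.add_odd o2
        rw [h] at e
        exact (Nat.not_even_iff_odd.mpr o3) e
  obtain ⟨U, V, hUV⟩ := hu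
  obtain ⟨e1, e2⟩ := hUV x y z hx hy hz h
  obtain ⟨e1', e2'⟩ := hUV x' y' z' hx' hy' hz' h'
  simp only at e1 e2 e1' e2'
  have i1 : x = x' := Nat.pow_right_injective ha.two_le (e1.trans e1'.symm)
  have i2 : y = y' := Nat.pow_right_injective hb.two_le (e2.trans e2'.symm)
  subst i1
  subst i2
  have i3 : z = z' := Nat.pow_right_injective hc.two_le (h.symm.trans h')
  rw [i3]
end

section
/- Let $D$ be a positive integer with $D \equiv 2 \pmod 4$. If $r > 1$ is an integer and $m$ is an integer such that in the ring $\mathbb{Z}[\sqrt{-D}]$ one has $(1 + \sqrt{-D})^r = m + \sqrt{-D}$ or $(1 + \sqrt{-D})^r = m - \sqrt{-D}$, then $D = 2$ and $r = 3$. Further, let $D$ be a positive integer with $D \equiv 0 \pmod 4$ such that $1 + D$ is a prime or a prime power; if $r > 1$ is an integer and $m$ is an integer with $(1 + \sqrt{-D})^r = m + \sqrt{-D}$ or $(1 + \sqrt{-D})^r = m - \sqrt{-D}$ in $\mathbb{Z}[\sqrt{-D}]$, then $D = 4$ and $r = 3$. -/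
namespace Stmt15

/-- Binomial expansion up to third order. -/
lemma one_add_pow_expand {A : Type*} [CommRing A] (x : A) (n : ℕ) :
    ∃ Q : A, (1 + x) ^ n = 1 + n * x + (n.choose 2 : ℕ) * x ^ 2 + (n.choose 3 : ℕ) * x ^ 3
      + x ^ 4 * Q := by
  induction n with
  | zero => exact ⟨0, by simp⟩
  | succ n ih =>
    obtain ⟨Q, hQ⟩ := ih
    refine ⟨(n.choose 3 : ℕ) + Q * (1 + x), ?_⟩
    rw [pow_succ, hQ, Nat.choose_succ_succ' n 1, Nat.choose_succ_succ' n 2, Nat.choose_one_right]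
    push_cast
    ring

lemma step {A : Type*} [CommRing A] (p k : ℕ) (hp : p.Prime) (hk : 1 ≤ k) (h2 : p = 2 → 2 ≤ k)
    (γ : A) : ∃ κ : A, (1 + (p : A) ^ k * γ) ^ p = 1 + (p : A) ^ (k + 1) * (γ + p * κ) := by
  obtain ⟨Q, hQ⟩ := one_add_pow_expand ((p : A) ^ k * γ) p
  obtain ⟨j, rfl⟩ : ∃ j, k = j + 1 := ⟨k - 1, by omega⟩
  have hc : ∃ c : A, ((p.choose 2 : ℕ) : A) * (p : A) ^ (2 * j + 2) = (p : A) ^ (j + 3) * c := by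
    by_cases h : p = 2
    · subst h
      have := h2 rfl
      obtain ⟨i, rfl⟩ : ∃ i, j = i + 1 := ⟨j - 1, by omega⟩
      refine ⟨2 ^ i, ?_⟩
      simp
      ring
    · have : p ∣ p.choose 2 := hp.dvd_choose_self (by norm_num)
        (lt_of_le_of_ne hp.two_le (Ne.symm h))
      obtain ⟨c, hc⟩ := this
      refine ⟨c * p ^ j, ?_⟩
      rw [hc]
      push_cast
      ring
  obtain ⟨c, hc⟩ := hc
  refine ⟨c * γ ^ 2 + (p.choose 3 : ℕ) * p ^ (2 * j) * γ ^ 3 + p ^ (3 * j + 1) * γ ^ 4 * Q, ?_⟩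
  rw [hQ]
  linear_combination γ ^ 2 * hc

lemma pow_struct {A : Type*} [CommRing A] (p c : ℕ) (hp : p.Prime) (hc : 1 ≤ c)
    (h2 : p = 2 → 2 ≤ c) (β : A) (t : ℕ) (ht : t ≠ 0) :
    ∃ (e o : ℕ) (κ : A), ¬ p ∣ o ∧
      (1 + (p : A) ^ c * β) ^ t = 1 + (p : A) ^ (c + e) * (o * β + p * κ) := by
  obtain ⟨e, o, ho, rfl⟩ := Nat.exists_eq_pow_mul_and_not_dvd ht p hp.ne_one
  refine ⟨e, o, ?_⟩
  clear ht
  suffices h : ∃ κ : A, (1 + (p : A) ^ c * β) ^ (p ^ e * o) =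
      1 + (p : A) ^ (c + e) * (o * β + p * κ) by
    obtain ⟨κ, h⟩ := h
    exact ⟨κ, ho, h⟩
  induction e with
  | zero =>
    obtain ⟨Q, hQ⟩ := one_add_pow_expand ((p : A) ^ c * β) o
    obtain ⟨j, rfl⟩ : ∃ j, c = j + 1 := ⟨c - 1, by omega⟩
    refine ⟨p ^ j * β ^ 2 * ((o.choose 2 : ℕ) + (o.choose 3 : ℕ) * (p ^ (j + 1) * β)
      + (p ^ (j + 1) * β) ^ 2 * Q), ?_⟩
    rw [pow_zero, one_mul, hQ]
    ring
  | succ e ih =>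
    obtain ⟨κ, h⟩ := ih
    obtain ⟨κ', h'⟩ := step p (c + e) hp (by omega) (fun h => by have := h2 h; omega)
      ((o : A) * β + p * κ)
    refine ⟨κ + κ', ?_⟩
    rw [pow_succ, mul_assoc, mul_comm p o, ← mul_assoc, pow_mul, h, h']
    ring

/-- If `α^i = 1 + p^c β` and `p` does not divide the imaginary part of `α^j β`, then the
imaginary part of `α^(j+i t)` never returns to that of `α^j`. -/
lemma no_return {d : ℤ} (a : ℤ√d) (p c i j t : ℕ) (hp : p.Prime) (hc : 1 ≤ c)
    (h2 : p = 2 → 2 ≤ c) (β : ℤ√d) (hβ : a ^ i = 1 + (p : ℤ√d) ^ c * β)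
    (hnd : ¬ (p : ℤ) ∣ (a ^ j * β).im) (ht : t ≠ 0) :
    (a ^ (j + i * t)).im ≠ (a ^ j).im := by
  obtain ⟨e, o, κ, ho, h⟩ := pow_struct p c hp hc h2 β t ht
  intro hE
  rw [pow_add, pow_mul, hβ, h] at hE
  have h1 : a ^ j * (1 + (p : ℤ√d) ^ (c + e) * (o * β + p * κ)) =
      a ^ j + (((p ^ (c + e) : ℕ) : ℤ) : ℤ√d) *
        (((o : ℤ) : ℤ√d) * (a ^ j * β) + ((p : ℤ) : ℤ√d) * (a ^ j * κ)) := by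
    push_cast
    ring
  rw [h1] at hE
  simp only [Zsqrtd.im_add, Zsqrtd.im_smul] at hE
  have h3 : ((p ^ (c + e) : ℕ) : ℤ) ≠ 0 := by
    have := hp.pos
    positivity
  have h4 : (o : ℤ) * (a ^ j * β).im + (p : ℤ) * (a ^ j * κ).im = 0 := by
    have : ((p ^ (c + e) : ℕ) : ℤ) * ((o : ℤ) * (a ^ j * β).im + (p : ℤ) * (a ^ j * κ).im) = 0 := by
      linarith
    exact (mul_eq_zero.mp this).resolve_left h3
  have h5 : (p : ℤ) ∣ (o : ℤ) * (a ^ j * β).im := ⟨-(a ^ j * κ).im, by linarith⟩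
  rcases (Nat.prime_iff_prime_int.mp hp).dvd_or_dvd h5 with h6 | h6
  · exact ho (by exact_mod_cast h6)
  · exact hnd h6

lemma im_mod_D (D r : ℕ) : (D : ℤ) ∣ ((⟨1, 1⟩ : ℤ√(-(D : ℤ))) ^ r).im - r := by
  have key : ∀ r : ℕ, (D : ℤ) ∣ ((⟨1, 1⟩ : ℤ√(-(D : ℤ))) ^ r).im - r ∧
      (D : ℤ) ∣ ((⟨1, 1⟩ : ℤ√(-(D : ℤ))) ^ r).re - 1 := by
    intro r
    induction r with
    | zero => simp
    | succ r ih =>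
      obtain ⟨⟨u, hu⟩, ⟨v, hv⟩⟩ := ih
      rw [pow_succ]
      simp only [Zsqrtd.im_mul, Zsqrtd.re_mul]
      constructor
      · exact ⟨u + v, by push_cast; linarith⟩
      · exact ⟨v - ((⟨1, 1⟩ : ℤ√(-(D : ℤ))) ^ r).im, by linarith⟩
  exact (key r).1

lemma im_mod_q (D r : ℕ) : ((1 + D : ℕ) : ℤ) ∣ ((⟨1, 1⟩ : ℤ√(-(D : ℤ))) ^ (r + 1)).im - 2 ^ r := by
  have key : ∀ r : ℕ, ((1 + D : ℕ) : ℤ) ∣ ((⟨1, 1⟩ : ℤ√(-(D : ℤ))) ^ (r + 1)).im - 2 ^ r ∧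
      ((1 + D : ℕ) : ℤ) ∣ ((⟨1, 1⟩ : ℤ√(-(D : ℤ))) ^ (r + 1)).re - 2 ^ r := by
    intro r
    induction r with
    | zero => simp
    | succ r ih =>
      obtain ⟨⟨u, hu⟩, ⟨v, hv⟩⟩ := ih
      rw [pow_succ]
      simp only [Zsqrtd.im_mul, Zsqrtd.re_mul]
      push_cast at hu hv ⊢
      constructor
      · exact ⟨u + v, by rw [pow_succ (2 : ℤ) r]; linarith⟩
      · exact ⟨u + v - ((⟨1, 1⟩ : ℤ√(-(D : ℤ))) ^ (r + 1)).im, by rw [pow_succ (2 : ℤ) r]; linarith⟩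
  exact (key r).1

lemma alpha4 (D : ℕ) (k : ℤ) (hk : (D : ℤ) ^ 2 - 6 * D = 4 * k) :
    (⟨1, 1⟩ : ℤ√(-(D : ℤ))) ^ 4 = 1 + ((2 : ℕ) : ℤ√(-(D : ℤ))) ^ 2 * ⟨k, 1 - D⟩ := by
  have h : ((2 : ℕ) : ℤ√(-(D : ℤ))) ^ 2 = ((4 : ℤ) : ℤ√(-(D : ℤ))) := by norm_num
  rw [h, Zsqrtd.ext_iff]
  simp [pow_succ]
  constructor <;> linarith

/-- residue mod 4 -/
lemma im_mod_four (D : ℕ) (k : ℤ) (hk : (D : ℤ) ^ 2 - 6 * D = 4 * k) (c t : ℕ) :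
    (4 : ℤ) ∣ ((⟨1, 1⟩ : ℤ√(-(D : ℤ))) ^ (c + 4 * t)).im - ((⟨1, 1⟩ : ℤ√(-(D : ℤ))) ^ c).im := by
  induction t with
  | zero => simp
  | succ t ih =>
    obtain ⟨u, hu⟩ := ih
    have h : ((2 : ℕ) : ℤ√(-(D : ℤ))) ^ 2 = ((4 : ℤ) : ℤ√(-(D : ℤ))) := by norm_num
    rw [show c + 4 * (t + 1) = (c + 4 * t) + 4 by ring, pow_add _ (c + 4 * t), alpha4 D k hk, h,
      mul_add, mul_one, mul_left_comm, Zsqrtd.im_add, Zsqrtd.im_smul]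
    exact ⟨u + ((⟨1, 1⟩ : ℤ√(-(D : ℤ))) ^ (c + 4 * t) * ⟨k, 1 - D⟩).im, by linarith⟩

def g (x : ℕ × ℕ) : ℕ × ℕ := ((9 * x.1 + 20 * x.2) % 205, (4 * x.1 + 9 * x.2) % 205)

lemma pell_orbit (Y : ℕ) : ∀ z : ℕ, z ^ 2 + 1 = 5 * Y ^ 2 →
    ∃ n < 20, (z % 205, Y % 205) = g^[n] (2, 1) := by
  induction Y using Nat.strong_induction_on with
  | _ Y ih =>
  intro z h
  by_cases hY : Y < 5
  · have hz : z < 9 := by nlinarith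
    interval_cases Y <;> interval_cases z <;> first | omega | exact ⟨0, by norm_num, by decide⟩
  · push Not at hY
    have h1 : 20 * Y ≤ 9 * z := by nlinarith
    have h2 : 4 * z ≤ 9 * Y := by nlinarith
    have h3 : 2 * Y < z := by nlinarith
    obtain ⟨z', hz'⟩ := Nat.exists_eq_add_of_le h1
    obtain ⟨Y', hY'⟩ := Nat.exists_eq_add_of_le h2
    have ez : z = 9 * z' + 20 * Y' := by omega
    have eY : Y = 4 * z' + 9 * Y' := by omega
    have h4 : Y' < Y := by omega
    obtain ⟨n, hn, hg⟩ := ih Y' h4 z' (by rw [ez, eY] at h; nlinarith)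
    have hs : (z % 205, Y % 205) = g^[n + 1] (2, 1) := by
      rw [Function.iterate_succ_apply', ← hg, g, Prod.mk.injEq]
      constructor <;> simp only <;> omega
    by_cases hn' : n + 1 < 20
    · exact ⟨n + 1, hn', hs⟩
    · refine ⟨0, by norm_num, ?_⟩
      rw [hs, show n + 1 = 20 by omega]
      decide

lemma pell_41 (z Y : ℕ) (h : z ^ 2 + 1 = 5 * Y ^ 2) (h5 : 5 ∣ Y) :
    (z ^ 2 + 5 * Y ^ 2) % 41 = 0 ∧ (2 * z * Y) ^ 2 % 41 = 8 := by
  obtain ⟨n, hn, hg⟩ := pell_orbit Y z h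
  have key : ∀ n < 20, (g^[n] (2, 1)).2 % 5 = 0 →
      ((g^[n] (2, 1)).1 ^ 2 + 5 * (g^[n] (2, 1)).2 ^ 2) % 41 = 0 ∧
      (2 * (g^[n] (2, 1)).1 * (g^[n] (2, 1)).2) ^ 2 % 41 = 8 := by decide
  have := key n hn
  rw [← hg] at this
  simp only at this
  obtain ⟨a, b⟩ := this (by omega)
  have ez : z % 205 ≡ z [MOD 41] := (Nat.mod_modEq z 205).of_dvd (by norm_num)
  have eY : Y % 205 ≡ Y [MOD 41] := (Nat.mod_modEq Y 205).of_dvd (by norm_num)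
  constructor
  · rw [← a]
    exact (((ez.pow 2).add ((eY.pow 2).mul_left 5))).symm
  · rw [← b]
    exact ((((ez.mul_left 2).mul eY).pow 2)).symm

/-- no solution when `q = 5^(2b+1)`, `b ≥ 1`. -/
lemma final_five (b s : ℕ) (hb : 1 ≤ b) (z y : ℤ)
    (h1 : z ^ 2 - 5 * (5 ^ b) ^ 2 * y ^ 2 = -1)
    (h2 : z ^ 2 - 2 * z * y + 5 * (5 ^ b) ^ 2 * y ^ 2 = (5 * (5 ^ b) ^ 2) ^ s) : False := by
  set Y : ℤ := 5 ^ b * y with hY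
  have e1 : z.natAbs ^ 2 + 1 = 5 * Y.natAbs ^ 2 := by
    zify
    rw [sq_abs, sq_abs]
    rw [hY]
    linarith
  have d5 : 5 ∣ Y.natAbs := by
    have : (5 : ℤ) ∣ Y := Dvd.dvd.mul_right (dvd_pow_self 5 (by omega)) y
    exact Int.natCast_dvd_natCast.mp (by simpa using this)
  obtain ⟨ha, hb'⟩ := pell_41 _ _ e1 d5
  have ha' : ((z.natAbs ^ 2 + 5 * Y.natAbs ^ 2 : ℕ) : ZMod 41) = ((0 : ℕ) : ZMod 41) :=
    (ZMod.natCast_eq_natCast_iff _ _ _).mpr ha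
  have hb'' : (((2 * z.natAbs * Y.natAbs) ^ 2 : ℕ) : ZMod 41) = ((8 : ℕ) : ZMod 41) :=
    (ZMod.natCast_eq_natCast_iff _ _ _).mpr hb'
  have ca : ((z : ZMod 41)) ^ 2 + 5 * (Y : ZMod 41) ^ 2 = 0 := by
    have : ((z.natAbs ^ 2 + 5 * Y.natAbs ^ 2 : ℕ) : ℤ) = z ^ 2 + 5 * Y ^ 2 := by
      push_cast
      rw [sq_abs, sq_abs]
    have h := congrArg (Int.cast : ℤ → ZMod 41) this
    rw [Int.cast_natCast, ha'] at h
    push_cast at h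
    exact h.symm
  have cb : (2 * (z : ZMod 41) * (Y : ZMod 41)) ^ 2 = 8 := by
    have : (((2 * z.natAbs * Y.natAbs) ^ 2 : ℕ) : ℤ) = (2 * z * Y) ^ 2 := by
      push_cast
      rw [mul_pow, mul_pow, sq_abs, sq_abs]
      ring
    have h := congrArg (Int.cast : ℤ → ZMod 41) this
    rw [Int.cast_natCast, hb''] at h
    push_cast at h
    exact h.symm
  have h3 : 5 ^ b * (z ^ 2 + 5 * Y ^ 2) - 2 * z * Y = 5 ^ b * (5 * (5 ^ b) ^ 2) ^ s := by
    rw [← h2, hY]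
    ring
  have h4 := congrArg (Int.cast : ℤ → ZMod 41) h3
  push_cast at h4
  rw [ca, mul_zero, zero_sub] at h4
  obtain ⟨w, h13⟩ : ∃ w : ZMod 41, (5 : ZMod 41) = w ^ 2 := ⟨13, by decide⟩
  have h5 : (w ^ b * (w * (w ^ b) ^ 2) ^ s) ^ 4 = 8 := by
    rw [← cb, ← neg_sq (2 * (z : ZMod 41) * Y), h4, h13]
    ring
  exact absurd h5 ((by decide : ∀ g : ZMod 41, g ^ 4 ≠ 8) _)

/-- `4 ∣ D` or `D ≡ 2 mod 4`: the imaginary part never returns, 2-adic version. -/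
lemma two_adic_one (D : ℕ) (k : ℤ) (hk : (D : ℤ) ^ 2 - 6 * D = 4 * k) (hD : 2 ∣ D) (hk2 : 2 ∣ k)
    (t : ℕ) (ht : t ≠ 0) : ((⟨1, 1⟩ : ℤ√(-(D : ℤ))) ^ (1 + 4 * t)).im ≠ 1 := by
  have := no_return (⟨1, 1⟩ : ℤ√(-(D : ℤ))) 2 2 4 1 t Nat.prime_two (by norm_num) (by norm_num)
    _ (alpha4 D k hk) (by simp; omega) ht
  simpa using this

lemma kappa_five {A : Type*} [CommRing A] (l : ℕ) (hl : l.Prime) (h : 5 ≤ l) (δ : A) (w N : ℕ)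
    (hN : N = l * w) (hδ : δ ^ 2 = -(N : A)) :
    ∃ κ : A, (1 + δ) ^ l = 1 + (l : A) ^ 1 * (δ + ((l : ℤ) : A) * κ) := by
  obtain ⟨c2, hc2⟩ : l ∣ l.choose 2 := hl.dvd_choose_self (by norm_num) (by omega)
  obtain ⟨c3, hc3⟩ : l ∣ l.choose 3 := hl.dvd_choose_self (by norm_num) (by omega)
  obtain ⟨Q, hQ⟩ := one_add_pow_expand δ l
  rw [hN, Nat.cast_mul] at hδ
  refine ⟨-(c2 * w) - c3 * w * δ + w ^ 2 * Q, ?_⟩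
  rw [hQ, hc2, hc3]
  push_cast
  linear_combination (l * c2 + l * c3 * δ + (δ ^ 2 - l * w) * Q) * hδ

lemma kappa_three {A : Type*} [CommRing A] (δ : A) (w N : ℕ) (hN : N = 9 * w)
    (hδ : δ ^ 2 = -(N : A)) :
    ∃ κ : A, (1 + δ) ^ 3 = 1 + ((3 : ℕ) : A) ^ 1 * (δ + (((3 : ℕ) : ℤ) : A) * κ) := by
  rw [hN, Nat.cast_mul] at hδ
  refine ⟨-(3 * w) - w * δ, ?_⟩
  push_cast at hδ ⊢
  linear_combination (3 + δ) * hδ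

lemma case_two (D : ℕ) (hD : D % 4 = 2) (r : ℕ) (hr : 1 < r)
    (h : ((⟨1, 1⟩ : ℤ√(-(D : ℤ))) ^ r).im = 1 ∨ ((⟨1, 1⟩ : ℤ√(-(D : ℤ))) ^ r).im = -1) :
    D = 2 ∧ r = 3 := by
  obtain ⟨d, rfl⟩ : ∃ d, D = 4 * d + 2 := ⟨D / 4, by omega⟩
  have hk : ((4 * d + 2 : ℕ) : ℤ) ^ 2 - 6 * (4 * d + 2 : ℕ) = 4 * (4 * d ^ 2 - 2 * d - 2) := by
    push_cast
    ring
  have h4 := im_mod_four (4 * d + 2) _ hk (r % 4) (r / 4)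
  rw [Nat.mod_add_div] at h4
  have hlt : r % 4 < 4 := Nat.mod_lt _ (by norm_num)
  have hc : r % 4 = 3 ∧ ((⟨1, 1⟩ : ℤ√(-((4 * d + 2 : ℕ) : ℤ))) ^ r).im = 1 := by
    have h1 : r % 4 = 1 → ((⟨1, 1⟩ : ℤ√(-((4 * d + 2 : ℕ) : ℤ))) ^ r).im ≠ 1 := by
      intro h1
      have := two_adic_one (4 * d + 2) _ hk (by omega) (by
        exact ⟨2 * d ^ 2 - d - 1, by ring⟩) (r / 4) (by omega)
      rwa [show 1 + 4 * (r / 4) = r by omega] at this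
    generalize ((⟨1, 1⟩ : ℤ√(-((4 * d + 2 : ℕ) : ℤ))) ^ r).im = u at h h4 h1 ⊢
    interval_cases r % 4 <;> simp [pow_succ] at h4 h1 ⊢ <;> omega
  obtain ⟨hr3, hu⟩ := hc
  by_cases hd : d = 0
  · subst hd
    refine ⟨rfl, ?_⟩
    by_contra hne
    have := no_return (⟨1, 1⟩ : ℤ√(-((4 * 0 + 2 : ℕ) : ℤ))) 2 2 4 3 (r / 4) Nat.prime_two
      (by norm_num) (by norm_num) _ (alpha4 _ _ hk) (by simp [pow_succ]; try omega) (by omega)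
    rw [show 3 + 4 * (r / 4) = r by omega, hu] at this
    simp [pow_succ] at this
  · exfalso
    have hDr : ((4 * d + 2 : ℕ) : ℤ) ∣ r - 1 := by
      have := im_mod_D (4 * d + 2) r
      rw [hu] at this
      rw [← Int.dvd_neg]
      simpa using this
    have hDr' : (4 * d + 2) ∣ r - 1 := by
      zify [hr.le]
      simpa using hDr
    -- a suitable odd prime
    obtain ⟨l, hl, hld, hl5⟩ : ∃ l : ℕ, l.Prime ∧ l ∣ 2 * d + 1 ∧
        (d = 1 ∨ 5 ≤ l ∨ (l = 3 ∧ 9 ∣ 4 * d + 2)) := by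
      by_cases h3 : 3 ∣ 2 * d + 1
      · obtain ⟨n, hn⟩ := h3
        by_cases hn1 : n = 1
        · exact ⟨3, Nat.prime_three, ⟨n, hn⟩, Or.inl (by omega)⟩
        · obtain ⟨l, hl, hln⟩ := Nat.exists_prime_and_dvd hn1
          refine ⟨l, hl, hn ▸ hln.mul_left 3, Or.inr ?_⟩
          by_cases h : l = 3
          · subst h
            right
            omega
          · left
            have h2 : l ≠ 2 := by rintro rfl; omega
            exact hl.five_le_of_ne_two_of_ne_three h2 h
      · obtain ⟨l, hl, hln⟩ := Nat.exists_prime_and_dvd (n := 2 * d + 1) (by omega)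
        refine ⟨l, hl, hln, Or.inr (Or.inl ?_)⟩
        have h2 : l ≠ 2 := by rintro rfl; omega
        have h3' : l ≠ 3 := by rintro rfl; exact h3 hln
        exact hl.five_le_of_ne_two_of_ne_three h2 h3'
    have hl2 : l ≠ 2 := by rintro rfl; omega
    have hlD : l ∣ 4 * d + 2 := by
      rw [show 4 * d + 2 = 2 * (2 * d + 1) by ring]
      exact hld.mul_left 2
    obtain ⟨t, ht⟩ := hlD.trans hDr'
    have ht0 : t ≠ 0 := by rintro rfl; omega
    have hfin : ∀ β : ℤ√(-((4 * d + 2 : ℕ) : ℤ)),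
        (⟨1, 1⟩ : ℤ√(-((4 * d + 2 : ℕ) : ℤ))) ^ l = 1 + (l : ℤ√(-((4 * d + 2 : ℕ) : ℤ))) ^ 1 * β →
        ¬ (l : ℤ) ∣ ((⟨1, 1⟩ : ℤ√(-((4 * d + 2 : ℕ) : ℤ))) ^ 1 * β).im → False := by
      intro β h1 h2
      have := no_return _ l 1 l 1 t hl le_rfl (fun h => absurd h hl2) β h1 h2 ht0
      rw [← ht, show 1 + (r - 1) = r by omega, hu] at this
      simp at this
    by_cases h6 : d = 1
    · subst h6
      have : l = 3 := (Nat.prime_dvd_prime_iff_eq hl Nat.prime_three).mp (by simpa using hld)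
      subst this
      apply hfin ⟨-6, -1⟩
      · have h : ((3 : ℕ) : ℤ√(-((4 * 1 + 2 : ℕ) : ℤ))) ^ 1 =
          ((3 : ℤ) : ℤ√(-((4 * 1 + 2 : ℕ) : ℤ))) := by norm_num
        rw [h, Zsqrtd.ext_iff]
        simp [pow_succ]
      · simp
        try omega
    · have hα : (⟨1, 1⟩ : ℤ√(-((4 * d + 2 : ℕ) : ℤ))) = 1 + ⟨0, 1⟩ := by
        rw [Zsqrtd.ext_iff]
        simp
      have hδ : (⟨0, 1⟩ : ℤ√(-((4 * d + 2 : ℕ) : ℤ))) ^ 2 = -((4 * d + 2 : ℕ) : ℤ√(-((4 * d + 2 : ℕ) : ℤ))) := by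
        rw [Zsqrtd.ext_iff]
        simp [pow_succ]
      obtain ⟨κ, hκ⟩ : ∃ κ : ℤ√(-((4 * d + 2 : ℕ) : ℤ)),
          (⟨1, 1⟩ : ℤ√(-((4 * d + 2 : ℕ) : ℤ))) ^ l =
            1 + (l : ℤ√(-((4 * d + 2 : ℕ) : ℤ))) ^ 1 * (⟨0, 1⟩ + ((l : ℤ) : ℤ√(-((4 * d + 2 : ℕ) : ℤ))) * κ) := by
        rw [hα]
        generalize (⟨0, 1⟩ : ℤ√(-((4 * d + 2 : ℕ) : ℤ))) = δ at hδ
        rcases hl5 with h | h | ⟨h, h9⟩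
        · exact absurd h h6
        · obtain ⟨w, hw⟩ := hlD
          exact kappa_five l hl h δ w _ hw hδ
        · obtain ⟨w, hw⟩ := h9
          subst h
          exact kappa_three δ w _ hw hδ
      apply hfin _ hκ
      rw [pow_one, mul_add, mul_left_comm, Zsqrtd.im_add, Zsqrtd.im_smul]
      intro hdvd
      have h1 := (Int.dvd_add_left (Dvd.intro _ rfl)).mp hdvd
      simp at h1
      have h2 : (l : ℤ) ∣ 1 := by exact_mod_cast h1
      have h3 : l ∣ 1 := by exact_mod_cast h2
      exact hl.one_lt.ne' (Nat.dvd_one.mp h3)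

lemma case_zero (D : ℕ) (hD0 : 0 < D) (hD : D % 4 = 0) (hq : IsPrimePow (1 + D)) (r : ℕ) (hr : 1 < r)
    (h : ((⟨1, 1⟩ : ℤ√(-(D : ℤ))) ^ r).im = 1 ∨ ((⟨1, 1⟩ : ℤ√(-(D : ℤ))) ^ r).im = -1) :
    D = 4 ∧ r = 3 := by
  obtain ⟨k, hk, hk2⟩ : ∃ k : ℤ, (D : ℤ) ^ 2 - 6 * D = 4 * k ∧ 2 ∣ k := by
    obtain ⟨d, rfl⟩ : ∃ d, D = 4 * d := ⟨D / 4, by omega⟩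
    exact ⟨4 * d ^ 2 - 6 * d, by push_cast; ring, ⟨2 * d ^ 2 - 3 * d, by ring⟩⟩
  have h4 := im_mod_four D _ hk (r % 4) (r / 4)
  rw [Nat.mod_add_div] at h4
  have hlt : r % 4 < 4 := Nat.mod_lt _ (by norm_num)
  have hc : r % 4 = 3 ∧ ((⟨1, 1⟩ : ℤ√(-(D : ℤ))) ^ r).im = -1 := by
    have h1 : r % 4 = 1 → ((⟨1, 1⟩ : ℤ√(-(D : ℤ))) ^ r).im ≠ 1 := by
      intro h1
      have := two_adic_one D _ hk (by omega) hk2 (r / 4) (by omega)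
      rwa [show 1 + 4 * (r / 4) = r by omega] at this
    generalize ((⟨1, 1⟩ : ℤ√(-(D : ℤ))) ^ r).im = u at h h4 h1 ⊢
    interval_cases r % 4 <;> simp [pow_succ] at h4 h1 ⊢ <;> omega
  obtain ⟨hr3, hu⟩ := hc
  obtain ⟨s, rfl⟩ : ∃ s, r = 2 * s + 1 := ⟨r / 2, by omega⟩
  have hDr : D ∣ 2 * s + 2 := by
    have := im_mod_D D (2 * s + 1)
    rw [hu, ← Int.dvd_neg] at this
    zify
    convert this using 1
    push_cast
    ring
  have hq2 := im_mod_q D (2 * s)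
  rw [hu] at hq2
  rw [isPrimePow_nat_iff] at hq
  obtain ⟨p, a, hp, ha, hpa⟩ := hq
  have hp5 : p = 5 := by
    have : Fact p.Prime := ⟨hp⟩
    have hp2 : p ≠ 2 := by
      rintro rfl
      have : 2 ∣ 1 + D := hpa ▸ dvd_pow_self 2 ha.ne'
      omega
    have hpd : (p : ℤ) ∣ -1 - 2 ^ (2 * s) := by
      refine dvd_trans ?_ hq2
      exact_mod_cast hpa ▸ dvd_pow_self p ha.ne'
    have hp1 : p - 1 ∣ 2 * s + 2 := by
      refine dvd_trans ?_ hDr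
      have := Nat.sub_dvd_pow_sub_pow p 1 a
      rwa [one_pow, hpa, Nat.add_sub_cancel_left] at this
    obtain ⟨c, hc⟩ := hp1
    have hne : (2 : ZMod p) ≠ 0 := by
      intro h0
      have : ((2 : ℕ) : ZMod p) = 0 := by exact_mod_cast h0
      rw [ZMod.natCast_eq_zero_iff] at this
      exact hp2 ((Nat.prime_dvd_prime_iff_eq hp Nat.prime_two).mp this)
    have e1 : (2 : ZMod p) ^ (2 * s + 2) = 1 := by
      rw [hc, pow_mul, ZMod.pow_card_sub_one_eq_one hne, one_pow]
    have e2 : (-1 : ZMod p) - 2 ^ (2 * s) = 0 := by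
      have := (ZMod.intCast_zmod_eq_zero_iff_dvd _ p).mpr hpd
      push_cast at this
      exact this
    have e3 : ((5 : ℕ) : ZMod p) = 0 := by
      push_cast
      linear_combination -4 * e2 - e1
    rw [ZMod.natCast_eq_zero_iff] at e3
    exact (Nat.prime_dvd_prime_iff_eq hp Nat.prime_five).mp e3
  subst hp5
  -- the Pell equation
  obtain ⟨x, y, hxy⟩ : ∃ x y : ℤ, (⟨1, 1⟩ : ℤ√(-(D : ℤ))) ^ s = ⟨x, y⟩ := ⟨_, _, rfl⟩
  have hqz : (D : ℤ) = 5 ^ a - 1 := by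
    have : ((5 ^ a : ℕ) : ℤ) = ((1 + D : ℕ) : ℤ) := by rw [hpa]
    push_cast at this
    linarith
  have hpell : (x + y) ^ 2 - 5 ^ a * y ^ 2 = -1 := by
    rw [pow_succ, mul_comm 2 s, pow_mul, hxy] at hu
    simp [pow_succ] at hu
    rw [hqz] at hu
    linarith
  have hnorm : x ^ 2 + D * y ^ 2 = (5 ^ a) ^ s := by
    have h1 := congrArg Zsqrtd.normMonoidHom hxy
    rw [map_pow] at h1
    simp [Zsqrtd.normMonoidHom, Zsqrtd.norm_def] at h1
    rw [show (5 : ℤ) ^ a = 1 + D by linarith, h1]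
    ring
  rcases Nat.even_or_odd' a with ⟨b, rfl | rfl⟩
  · exfalso
    have hb : b ≠ 0 := by rintro rfl; simp at ha
    have e : (5 ^ b * y - (x + y)) * (5 ^ b * y + (x + y)) = 1 := by
      rw [mul_comm 2 b, pow_mul] at hpell
      linarith
    rcases Int.eq_one_or_neg_one_of_mul_eq_one' e with ⟨h1, h2⟩ | ⟨h1, h2⟩
    · have : (5 : ℤ) ^ b ∣ 1 := ⟨y, by linarith⟩
      have := (dvd_pow_self (5 : ℤ) hb).trans this
      omega
    · have : (5 : ℤ) ^ b ∣ 1 := ⟨-y, by linarith⟩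
      have := (dvd_pow_self (5 : ℤ) hb).trans this
      omega
  · by_cases hb : b = 0
    · subst hb
      have hD4 : D = 4 := by omega
      subst hD4
      refine ⟨rfl, ?_⟩
      by_contra hne
      have := no_return (⟨1, 1⟩ : ℤ√(-((4 : ℕ) : ℤ))) 2 2 4 3 ((2 * s + 1) / 4) Nat.prime_two
        (by norm_num) (by norm_num) _ (alpha4 _ _ hk) (by simp [pow_succ]; omega) (by omega)
      rw [show 3 + 4 * ((2 * s + 1) / 4) = 2 * s + 1 by omega, hu] at this
      simp [pow_succ] at this
    · exfalso
      have e : (5 : ℤ) ^ (2 * b + 1) = 5 * (5 ^ b) ^ 2 := by ring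
      rw [e] at hpell hnorm hqz
      apply final_five b s (by omega) (x + y) y hpell
      rw [← hnorm, hqz]
      ring

end Stmt15

/-- Lemma 2.10: the equation `(1 + √-D)^r = m ± √-D` in `ℤ[√-D]` with integer
`r > 1` has no solutions when `D ≡ 2 mod 4` except `D = 2, r = 3`, and none when
`D ≡ 0 mod 4` with `1 + D` a prime or prime power except `D = 4, r = 3`. -/
theorem stmt_15 :
    (∀ D : ℕ, 0 < D → D % 4 = 2 → ∀ r : ℕ, 1 < r → ∀ m : ℤ,
        ((⟨1, 1⟩ : ℤ√(-(D : ℤ))) ^ r = ⟨m, 1⟩ ∨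
          (⟨1, 1⟩ : ℤ√(-(D : ℤ))) ^ r = ⟨m, -1⟩) →
        D = 2 ∧ r = 3) ∧
    (∀ D : ℕ, 0 < D → D % 4 = 0 → IsPrimePow (1 + D) → ∀ r : ℕ, 1 < r → ∀ m : ℤ,
        ((⟨1, 1⟩ : ℤ√(-(D : ℤ))) ^ r = ⟨m, 1⟩ ∨
          (⟨1, 1⟩ : ℤ√(-(D : ℤ))) ^ r = ⟨m, -1⟩) →
        D = 4 ∧ r = 3) := by
  refine ⟨fun D _ hD r hr m h => ?_, fun D hD0 hD hq r hr m h => ?_⟩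
  · exact Stmt15.case_two D hD r hr (h.imp (fun h => by rw [h]) (fun h => by rw [h]))
  · exact Stmt15.case_zero D hD0 hD hq r hr (h.imp (fun h => by rw [h]) (fun h => by rw [h]))
end

section
/- Let $m, n, x, y$ be positive integers with $m \neq x$, and let $d$ be an integer such that $3^m - 2^n = d$ and $3^x - 2^y = d$. Then $d = 1$, $d = -5$, or $d = -13$. -/
lemma aux_im_pow {F : ℤ} (z : ℤ√F) (t : ℕ) : ∃ k l : ℤ,
    (z ^ (t + 1)).im = z.im * ((t + 1) * z.re ^ t + F * k) ∧
    (z ^ (t + 1)).re = z.re ^ (t + 1) + F * z.im * l := by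
  induction t with
  | zero => exact ⟨0, 0, by simp, by simp⟩
  | succ t ih =>
    obtain ⟨k, l, h1, h2⟩ := ih
    refine ⟨z.im * l + z.re * k, l * z.re + z.im * ((t + 1) * z.re ^ t + F * k), ?_, ?_⟩
    · rw [pow_succ, Zsqrtd.im_mul, h1, h2]; push_cast; ring
    · rw [pow_succ, Zsqrtd.re_mul, h1, h2]; ring

lemma aux_val_base {F : ℤ} (q : ℕ) (hq : q.Prime) (hF : (q : ℤ) ∣ F) (z : ℤ√F)
    (hz : ¬ (q : ℤ) ∣ z.re) (t : ℕ) (ht : ¬ q ∣ t) :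
    ∃ c : ℤ, ¬ (q : ℤ) ∣ c ∧ (z ^ t).im = z.im * c := by
  have hq' : Prime (q : ℤ) := Nat.prime_iff_prime_int.mp hq
  obtain _ | t := t
  · simp at ht
  · obtain ⟨k, l, h1, h2⟩ := aux_im_pow z t
    refine ⟨_, ?_, h1⟩
    intro h
    rw [Int.dvd_add_left (hF.mul_right k)] at h
    rcases hq'.dvd_or_dvd h with h | h
    · exact ht (by exact_mod_cast h)
    · exact hz (hq'.dvd_of_dvd_pow h)

lemma aux_val3 {F : ℤ} (hF : (9 : ℤ) ∣ F) (t : ℕ) (ht : ¬ 3 ∣ t) (s : ℕ) :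
    ∀ z : ℤ√F, ¬ (3 : ℤ) ∣ z.re →
    ∃ c : ℤ, ¬ (3 : ℤ) ∣ c ∧ (z ^ (3 ^ s * t)).im = 3 ^ s * z.im * c := by
  induction s with
  | zero =>
    intro z hz
    obtain ⟨c, hc, h⟩ := aux_val_base 3 Nat.prime_three
      (Dvd.dvd.trans (by norm_num) hF) z (by exact_mod_cast hz) t ht
    exact ⟨c, by exact_mod_cast hc, by simpa using h⟩
  | succ s ih =>
    intro z hz
    obtain ⟨G, rfl⟩ := hF
    have h3 : Prime (3 : ℤ) := Int.prime_three
    have hre : (z ^ 3).re = z.re ^ 3 + 3 * (9 * G * z.re * z.im ^ 2) := by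
      simp only [pow_succ, pow_zero, one_mul, Zsqrtd.re_mul, Zsqrtd.im_mul]; ring
    have him : (z ^ 3).im = 3 * z.im * (z.re ^ 2 + 3 * (G * z.im ^ 2)) := by
      simp only [pow_succ, pow_zero, one_mul, Zsqrtd.re_mul, Zsqrtd.im_mul]; ring
    obtain ⟨c, hc, h⟩ := ih (z ^ 3) (by
      rw [hre, Int.dvd_add_left (Dvd.intro _ rfl)]
      exact fun h => hz (h3.dvd_of_dvd_pow h))
    refine ⟨(z.re ^ 2 + 3 * (G * z.im ^ 2)) * c, ?_, ?_⟩
    · intro h'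
      rcases h3.dvd_or_dvd h' with h' | h'
      · rw [Int.dvd_add_left (Dvd.intro _ rfl)] at h'
        exact hz (h3.dvd_of_dvd_pow h')
      · exact hc h'
    · rw [show 3 ^ (s + 1) * t = 3 * (3 ^ s * t) by ring, pow_mul, h, him]; ring

lemma aux_val2 {F : ℤ} (hF : (2 : ℤ) ∣ F) (t : ℕ) (ht : ¬ 2 ∣ t) (s : ℕ) :
    ∀ z : ℤ√F, ¬ (2 : ℤ) ∣ z.re →
    ∃ c : ℤ, ¬ (2 : ℤ) ∣ c ∧ (z ^ (2 ^ s * t)).im = 2 ^ s * z.im * c := by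
  induction s with
  | zero =>
    intro z hz
    obtain ⟨c, hc, h⟩ := aux_val_base 2 Nat.prime_two
      hF z (by exact_mod_cast hz) t ht
    exact ⟨c, by exact_mod_cast hc, by simpa using h⟩
  | succ s ih =>
    intro z hz
    obtain ⟨G, rfl⟩ := hF
    have h2 : Prime (2 : ℤ) := Int.prime_two
    have hre : (z ^ 2).re = z.re ^ 2 + 2 * (G * z.im ^ 2) := by
      simp only [pow_succ, pow_zero, one_mul, Zsqrtd.re_mul]; ring
    have him : (z ^ 2).im = 2 * z.im * z.re := by
      simp only [pow_succ, pow_zero, one_mul, Zsqrtd.im_mul]; ring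
    obtain ⟨c, hc, h⟩ := ih (z ^ 2) (by
      rw [hre, Int.dvd_add_left (Dvd.intro _ rfl)]
      exact fun h => hz (h2.dvd_of_dvd_pow h))
    refine ⟨z.re * c, ?_, ?_⟩
    · intro h'
      rcases h2.dvd_or_dvd h' with h' | h'
      · exact hz h'
      · exact hc h'
    · rw [show 2 ^ (s + 1) * t = 2 * (2 ^ s * t) by ring, pow_mul, h, him]; ring

/-- a small multiple must vanish -/
lemma aux_small (E U V M : ℤ) (hE : 2 ≤ E) (hM : 0 < M) (h : U ^ 2 + E * V ^ 2 = M ^ 2)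
    (hd : M ∣ V) : V = 0 := by
  obtain ⟨s, rfl⟩ := hd
  by_contra hne
  have hs : s ≠ 0 := by rintro rfl; simp at hne
  have hs2 : 1 ≤ s ^ 2 := by have := pow_pos (abs_pos.mpr hs) 2; rw [sq_abs] at this; omega
  have hM2 : 0 < M ^ 2 := by positivity
  nlinarith [sq_nonneg U, mul_le_mul hE hs2 (by norm_num) (by linarith)]

lemma aux_eq_of_cross (E M p r p' r' : ℤ) (hM : 0 < M) (h1 : p ^ 2 + E * r ^ 2 = M)
    (h2 : p' ^ 2 + E * r' ^ 2 = M) (h : (p * r' - p' * r) * (p * r' + p' * r) = 0) :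
    r ^ 2 = r' ^ 2 := by
  have : M * (r' ^ 2 - r ^ 2) = 0 := by
    linear_combination h - r' ^ 2 * h1 + r ^ 2 * h2
  rcases mul_eq_zero.mp this with h | h <;> linarith

lemma aux_cross (E M p r p' r' : ℤ) (hE : 2 ≤ E) (hM : 0 < M) (h1 : p ^ 2 + E * r ^ 2 = M)
    (h2 : p' ^ 2 + E * r' ^ 2 = M)
    (h : M ∣ p * r' - p' * r ∨ M ∣ p * r' + p' * r) : r ^ 2 = r' ^ 2 := by
  apply aux_eq_of_cross E M p r p' r' hM h1 h2
  rcases h with h | h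
  · rw [aux_small E (p * p' + E * r * r') _ M hE hM
      (by rw [pow_two M]; nth_rewrite 1 [← h1]; rw [← h2]; ring) h, zero_mul]
  · rw [aux_small E (p * p' - E * r * r') (p * r' + p' * r) M hE hM
      (by rw [pow_two M]; nth_rewrite 1 [← h1]; rw [← h2]; ring) h, mul_zero]

lemma aux_eq3 (E : ℤ) (k : ℕ) (p r p' r' : ℤ) (hE : 2 ≤ E)
    (h1 : p ^ 2 + E * r ^ 2 = 3 ^ k) (h2 : p' ^ 2 + E * r' ^ 2 = 3 ^ k)
    (hp : ¬ (3 : ℤ) ∣ p) (hr : ¬ (3 : ℤ) ∣ r') : r ^ 2 = r' ^ 2 := by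
  have h3 : Prime (3 : ℤ) := Int.prime_three
  apply aux_cross E (3 ^ k) p r p' r' hE (by positivity) h1 h2
  have hprod : (3 : ℤ) ^ k ∣ (p * r' - p' * r) * (p * r' + p' * r) :=
    ⟨r' ^ 2 - r ^ 2, by linear_combination r' ^ 2 * h1 - r ^ 2 * h2⟩
  have hpr : ¬ (3 : ℤ) ∣ p * r' := fun h => (h3.dvd_or_dvd h).elim hp hr
  by_cases hc : (3 : ℤ) ∣ p * r' - p' * r
  · have : ¬ (3 : ℤ) ∣ p * r' + p' * r := by omega
    left
    exact (((Prime.coprime_iff_not_dvd h3).mpr this).pow_left).dvd_of_dvd_mul_right hprod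
  · right
    exact (((Prime.coprime_iff_not_dvd h3).mpr hc).pow_left).dvd_of_dvd_mul_left hprod

lemma aux_eq2 (E : ℤ) (k : ℕ) (p r p' r' : ℤ) (hE : 2 ≤ E)
    (h1 : p ^ 2 + E * r ^ 2 = 2 ^ k) (h2 : p' ^ 2 + E * r' ^ 2 = 2 ^ k)
    (hp : Odd p) (hr : Odd r) (hp' : Odd p') (hr' : Odd r') : r ^ 2 = r' ^ 2 := by
  apply aux_cross E (2 ^ k) p r p' r' hE (by positivity) h1 h2
  obtain ⟨A, hA⟩ : Odd (p * r') := hp.mul hr'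
  obtain ⟨B, hB⟩ : Odd (p' * r) := hp'.mul hr
  have h8 : (8 : ℤ) ∣ r' ^ 2 - r ^ 2 := by
    have e1 := Int.eight_dvd_sq_sub_one_of_odd hr
    have e2 := Int.eight_dvd_sq_sub_one_of_odd hr'
    omega
  obtain ⟨g, hg⟩ := h8
  have hprod : (p * r' - p' * r) * (p * r' + p' * r) = 2 ^ k * (8 * g) := by
    rw [← hg]; linear_combination r' ^ 2 * h1 - r ^ 2 * h2
  rw [hA, hB] at hprod ⊢
  have hprod' : (A - B) * (A + B + 1) = 2 ^ k * (2 * g) := by linarith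
  have hd : (2 : ℤ) ^ k ∣ (A - B) * (A + B + 1) := ⟨_, hprod'⟩
  have h2 : Prime (2 : ℤ) := Int.prime_two
  have e1 : 2 * A + 1 - (2 * B + 1) = 2 * (A - B) := by ring
  have e2 : 2 * A + 1 + (2 * B + 1) = 2 * (A + B + 1) := by ring
  rw [e1, e2]
  by_cases hc : (2 : ℤ) ∣ A - B
  · have : ¬ (2 : ℤ) ∣ A + B + 1 := by omega
    left
    exact ((((Prime.coprime_iff_not_dvd h2).mpr this).pow_left).dvd_of_dvd_mul_right hd).mul_left 2
  · right
    exact ((((Prime.coprime_iff_not_dvd h2).mpr hc).pow_left).dvd_of_dvd_mul_left hd).mul_left 2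

lemma aux_sqrel {F : ℤ} (z : ℤ√F) : z ^ 2 = (2 * z.re : ℤ) * z - (z.norm : ℤ) := by
  ext <;> simp [pow_two, Zsqrtd.norm_def, Zsqrtd.re_mul, Zsqrtd.im_mul] <;> ring

/-- non-divisibility by 3 of powers -/
lemma aux_prim3 {F : ℤ} (z : ℤ√F) (hN : (3 : ℤ) ∣ z.norm) (hre : ¬ (3 : ℤ) ∣ z.re)
    (him : ¬ (3 : ℤ) ∣ z.im) (j : ℕ) :
    ¬ (3 : ℤ) ∣ (z ^ (j + 1)).re ∧ ¬ (3 : ℤ) ∣ (z ^ (j + 1)).im := by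
  have h3 : Prime (3 : ℤ) := Int.prime_three
  have key : ∃ w : ℤ√F, z ^ (j + 1) = ((2 * z.re) ^ j : ℤ) * z + (3 : ℤ) * w := by
    induction j with
    | zero => exact ⟨0, by simp⟩
    | succ j ih =>
      obtain ⟨w, hw⟩ := ih
      obtain ⟨g, hg⟩ := hN
      refine ⟨w * z - ((2 * z.re) ^ j * g : ℤ), ?_⟩
      have hs := aux_sqrel z
      rw [hg] at hs
      rw [pow_succ, hw]
      push_cast at hs ⊢
      linear_combination (2 * (z.re : ℤ√F)) ^ j * hs
  obtain ⟨w, hw⟩ := key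
  have h2 : ¬ (3 : ℤ) ∣ (2 * z.re) ^ j := by
    intro h
    have := h3.dvd_of_dvd_pow h
    omega
  have hr : (z ^ (j + 1)).re = (2 * z.re) ^ j * z.re + 3 * w.re := by
    rw [hw]; simp only [Zsqrtd.re_add, Zsqrtd.re_mul, Zsqrtd.re_intCast, Zsqrtd.im_intCast]; ring
  have hi : (z ^ (j + 1)).im = (2 * z.re) ^ j * z.im + 3 * w.im := by
    rw [hw]; simp only [Zsqrtd.im_add, Zsqrtd.im_mul, Zsqrtd.re_intCast, Zsqrtd.im_intCast]; ring
  rw [hr, hi]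
  constructor
  · rw [Int.dvd_add_left (Dvd.intro _ rfl)]
    exact fun h => (h3.dvd_or_dvd h).elim h2 hre
  · rw [Int.dvd_add_left (Dvd.intro _ rfl)]
    exact fun h => (h3.dvd_or_dvd h).elim h2 him

/-- powers in the half-integer order -/
lemma aux_prim2 {F : ℤ} (z : ℤ√F) (hN : (8 : ℤ) ∣ z.norm) (hre : Odd z.re) (him : Odd z.im)
    (j : ℕ) : ∃ w : ℤ√F, Odd w.re ∧ Odd w.im ∧ z ^ (j + 1) = (2 ^ j : ℤ) * w := by
  have key : (∃ w : ℤ√F, Odd w.re ∧ Odd w.im ∧ z ^ (j + 1) = (2 ^ j : ℤ) * w) ∧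
      (∃ w : ℤ√F, Odd w.re ∧ Odd w.im ∧ z ^ (j + 2) = (2 ^ (j + 1) : ℤ) * w) := by
    obtain ⟨g, hg⟩ := hN
    have hs := aux_sqrel z
    rw [hg] at hs
    induction j with
    | zero =>
      refine ⟨⟨z, hre, him, by simp⟩, ⟨(z.re : ℤ) * z - (4 * g : ℤ), ?_, ?_, ?_⟩⟩
      · have : ((z.re : ℤ) * z - (4 * g : ℤ) : ℤ√F).re = z.re * z.re - 2 * (2 * g) := by
          simp only [Zsqrtd.re_sub, Zsqrtd.re_mul, Zsqrtd.re_intCast, Zsqrtd.im_intCast]; ring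
        rw [this]
        exact (hre.mul hre).sub_even (even_two_mul _)
      · have : ((z.re : ℤ) * z - (4 * g : ℤ) : ℤ√F).im = z.re * z.im := by
          simp only [Zsqrtd.im_sub, Zsqrtd.im_mul, Zsqrtd.re_intCast, Zsqrtd.im_intCast]; ring
        rw [this]
        exact hre.mul him
      · rw [hs]; push_cast; ring
    | succ j ih =>
      obtain ⟨⟨w, h1, h2, h3⟩, ⟨v, h4, h5, h6⟩⟩ := ih
      refine ⟨⟨v, h4, h5, h6⟩, ⟨(z.re : ℤ) * v - (2 * g : ℤ) * w, ?_, ?_, ?_⟩⟩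
      · have : ((z.re : ℤ) * v - (2 * g : ℤ) * w : ℤ√F).re = z.re * v.re - 2 * (g * w.re) := by
          simp only [Zsqrtd.re_sub, Zsqrtd.re_mul, Zsqrtd.re_intCast, Zsqrtd.im_intCast]; ring
        rw [this]
        exact (hre.mul h4).sub_even (even_two_mul _)
      · have : ((z.re : ℤ) * v - (2 * g : ℤ) * w : ℤ√F).im = z.re * v.im - 2 * (g * w.im) := by
          simp only [Zsqrtd.im_sub, Zsqrtd.im_mul, Zsqrtd.re_intCast, Zsqrtd.im_intCast]; ring
        rw [this]
        exact (hre.mul h5).sub_even (even_two_mul _)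
      · rw [show j + 1 + 2 = (j + 1) + 2 by ring, pow_add, hs, mul_sub]
        push_cast at h3 h6 ⊢
        linear_combination (2 * (z.re : ℤ√F)) * h6 - 8 * (g : ℤ√F) * h3
  exact key.1

lemma aux_norm_pow {F : ℤ} (z : ℤ√F) (j : ℕ) : (z ^ j).norm = z.norm ^ j := by
  induction j with
  | zero => simp
  | succ j ih => rw [pow_succ, Zsqrtd.norm_mul, ih, pow_succ]

lemma aux_norm_neg {E : ℤ} (z : ℤ√(-E)) : z.norm = z.re ^ 2 + E * z.im ^ 2 := by
  rw [Zsqrtd.norm_def]; ring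

lemma aux_pow_dvd_le (q : ℤ) (hq : Prime q) (i j : ℕ) (c : ℤ) (hc : ¬ q ∣ c)
    (h : q ^ i ∣ q ^ j * c) : i ≤ j := by
  have h' : q ^ i ∣ q ^ j :=
    (((Prime.coprime_iff_not_dvd hq).mpr hc).pow_left).dvd_of_dvd_mul_right h
  exact (pow_dvd_pow_iff hq.ne_zero hq.not_isUnit).mp h'

lemma aux_lin2 (B : ℕ) (hB : 0 < B) : 4 * B ≤ 2 ^ (B + 1) := by
  induction B, hB using Nat.le_induction with
  | base => norm_num
  | succ k hk ih => rw [pow_succ]; omega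

lemma aux_lin3 (B : ℕ) (hB : 0 < B) : 8 * B ≤ 3 ^ (B + 1) := by
  induction B, hB using Nat.le_induction with
  | base => norm_num
  | succ k hk ih => rw [pow_succ]; omega

lemma aux_pos (m n a B : ℕ) (hm : 0 < m) (hn : 0 < n) (ha : Even a) (hB : 0 < B)
    (h : (3 : ℤ) ^ m * (3 ^ a - 1) = 2 ^ n * (2 ^ (2 * B) - 1))
    (hd : (2 : ℤ) ^ n < 3 ^ m) : False := by
  have h3 : Prime (3 : ℤ) := Int.prime_three
  have h2 : Prime (2 : ℤ) := Int.prime_two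
  have n3 : ∀ k, ¬ (3 : ℤ) ∣ 2 ^ k := fun k hk => by
    have := h3.dvd_of_dvd_pow hk; omega
  have n2 : ∀ k, ¬ (2 : ℤ) ∣ 3 ^ k := fun k hk => by
    have := h2.dvd_of_dvd_pow hk; omega
  obtain ⟨d, hdd⟩ : ∃ d : ℤ, d = 3 ^ m - 2 ^ n := ⟨_, rfl⟩
  have hd0 : 0 < d := by linarith
  have hx : (3 : ℤ) ^ (m + a) = 2 ^ (n + 2 * B) + d := by
    rw [pow_add, pow_add]; linarith
  have hmm : (3 : ℤ) ^ m = 2 ^ n + d := by linarith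
  obtain ⟨E, hE⟩ : ∃ E : ℤ, E = 2 ^ n * d := ⟨_, rfl⟩
  have hE2 : 2 ∣ E := by rw [hE]; exact (dvd_pow_self 2 hn.ne').mul_right d
  have hE0 : 2 ≤ E := by
    have : 0 < E := by rw [hE]; positivity
    omega
  let z1 : ℤ√(-E) := ⟨2 ^ n - d, 2⟩
  let z2 : ℤ√(-E) := ⟨2 ^ (n + 2 * B) - d, 2 ^ (B + 1)⟩
  have hz1 : z1.norm = 3 ^ (2 * m) := by
    rw [aux_norm_neg, mul_comm 2 m, pow_mul, hmm]
    simp only [z1, hE]; ring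
  have hz2 : z2.norm = 3 ^ (2 * (m + a)) := by
    rw [aux_norm_neg, mul_comm 2 (m + a), pow_mul, hx]
    simp only [z2, hE]; ring
  have r1 : z1.re = 2 * 2 ^ n - 3 ^ m := by simp only [z1]; linarith
  have r2 : z2.re = 2 * 2 ^ (n + 2 * B) - 3 ^ (m + a) := by simp only [z2]; linarith
  have d3 : (3 : ℤ) ∣ 3 ^ m := dvd_pow_self 3 hm.ne'
  have d3' : (3 : ℤ) ∣ 3 ^ (m + a) := dvd_pow_self 3 (by omega)
  have r13 : ¬ (3 : ℤ) ∣ z1.re := by have := n3 n; omega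
  have r23 : ¬ (3 : ℤ) ∣ z2.re := by have := n3 (n + 2 * B); omega
  have r12 : ¬ (2 : ℤ) ∣ z1.re := by have := n2 m; omega
  have r22 : ¬ (2 : ℤ) ∣ z2.re := by have := n2 (m + a); omega
  have e1 := (aux_prim3 z1 (by rw [hz1]; exact dvd_pow_self 3 (by omega)) r13
    (by simp only [z1]; norm_num) (m + a - 1)).1
  have e2 := (aux_prim3 z2 (by rw [hz2]; exact dvd_pow_self 3 (by omega)) r23
    (n3 _) (m - 1)).2
  rw [show m + a - 1 + 1 = m + a by omega] at e1
  rw [show m - 1 + 1 = m by omega] at e2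
  have key := aux_eq3 E (2 * m * (m + a)) (z1 ^ (m + a)).re (z1 ^ (m + a)).im
    (z2 ^ m).re (z2 ^ m).im hE0
    (by rw [← aux_norm_neg, aux_norm_pow, hz1, ← pow_mul])
    (by rw [← aux_norm_neg, aux_norm_pow, hz2, ← pow_mul]; congr 1; ring) e1 e2
  obtain ⟨s, t, ht, hst⟩ := Nat.exists_eq_pow_mul_and_not_dvd (n := m + a) (by omega) 2 (by norm_num)
  obtain ⟨s', t', ht', hst'⟩ := Nat.exists_eq_pow_mul_and_not_dvd (n := m) (by omega) 2 (by norm_num)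
  obtain ⟨c, hc, i1⟩ := aux_val2 (F := -E) (by omega) t ht s z1 r12
  obtain ⟨c', hc', i2⟩ := aux_val2 (F := -E) (by omega) t' ht' s' z2 r22
  rw [← hst] at i1
  rw [← hst'] at i2
  have hdv : (z2 ^ m).im ∣ (z1 ^ (m + a)).im := by
    rw [← Int.pow_dvd_pow_iff (n := 2) (by norm_num), key]
  have hle : s' + (B + 1) ≤ s + 1 := by
    apply aux_pow_dvd_le 2 h2 _ _ c hc
    have : (2 : ℤ) ^ (s + 1) * c = (z1 ^ (m + a)).im := by rw [i1]; simp only [z1]; ring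
    rw [this]
    refine Dvd.dvd.trans ⟨c', ?_⟩ hdv
    rw [i2]; simp only [z2]; ring
  have hs0 : 2 ∣ m + a := by
    rw [hst]; exact (dvd_pow_self 2 (by omega)).mul_right t
  have hs' : s' ≠ 0 := by
    rintro rfl
    obtain ⟨a', rfl⟩ := ha
    simp at hst'
    omega
  have hdvd : 2 ^ (B + 1) ∣ m + a := by
    conv_rhs => rw [hst]
    exact (pow_dvd_pow 2 (by omega)).mul_right t
  have hbig := Nat.le_of_dvd (by omega) hdvd
  have hlin := aux_lin2 B hB
  have ha' : a < 2 * B := by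
    have p1 : (0 : ℤ) < 2 ^ n := by positivity
    have p2 : (1 : ℤ) ≤ 3 ^ a := one_le_pow₀ (by norm_num)
    have p3 : (1 : ℤ) < 2 ^ (2 * B) := one_lt_pow₀ (by norm_num) (by omega)
    have lt : (3 : ℤ) ^ a < 2 ^ (2 * B) := by
      by_contra hcon
      push Not at hcon
      nlinarith
    have : (2 : ℤ) ^ a < 2 ^ (2 * B) :=
      lt_of_le_of_lt (pow_le_pow_left₀ (by norm_num) (by norm_num) a) lt
    exact (pow_lt_pow_iff_right₀ (by norm_num)).mp this
  have hm' : m < 2 * B := by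
    have hdiv : (3 : ℤ) ^ m ∣ 2 ^ n * (2 ^ (2 * B) - 1) := ⟨_, h.symm⟩
    have hdiv' := (((Prime.coprime_iff_not_dvd h3).mpr (n3 n)).pow_left (m := m)).dvd_of_dvd_mul_left hdiv
    have p3 : (1 : ℤ) < 2 ^ (2 * B) := one_lt_pow₀ (by norm_num) (by omega)
    have := Int.le_of_dvd (by linarith) hdiv'
    have : (2 : ℤ) ^ m < 2 ^ (2 * B) :=
      lt_of_le_of_lt (pow_le_pow_left₀ (by norm_num) (by norm_num : (2 : ℤ) ≤ 3) m) (by linarith)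
    exact (pow_lt_pow_iff_right₀ (by norm_num)).mp this
  omega

lemma aux_neg (m N c b : ℕ) (hm : 2 ≤ m) (hc : 0 < c) (hb : 3 ∣ b) (hb0 : 0 < b)
    (h : (3 : ℤ) ^ m * (3 ^ (2 * c) - 1) = 2 ^ (N + 3) * (2 ^ b - 1))
    (hd : (3 : ℤ) ^ m < 2 ^ (N + 3)) : False := by
  have h3 : Prime (3 : ℤ) := Int.prime_three
  have h2 : Prime (2 : ℤ) := Int.prime_two
  have n3 : ∀ k, ¬ (3 : ℤ) ∣ 2 ^ k := fun k hk => by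
    have := h3.dvd_of_dvd_pow hk; omega
  have n2 : ∀ k, ¬ (2 : ℤ) ∣ 3 ^ k := fun k hk => by
    have := h2.dvd_of_dvd_pow hk; omega
  obtain ⟨d, hdd⟩ : ∃ d : ℤ, d = 2 ^ (N + 3) - 3 ^ m := ⟨_, rfl⟩
  have hd0 : 0 < d := by linarith
  have hx : d = 2 ^ (N + b + 3) - 3 ^ (m + 2 * c) := by
    rw [show N + b + 3 = N + 3 + b by ring, pow_add _ m, pow_add _ (N + 3)]; linarith
  obtain ⟨E, hE⟩ : ∃ E : ℤ, E = 3 ^ m * d := ⟨_, rfl⟩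
  have d9 : (9 : ℤ) ∣ 3 ^ m := by
    have := pow_dvd_pow (3 : ℤ) hm; norm_num at this; exact this
  have hE9 : 9 ∣ E := by rw [hE]; exact d9.mul_right d
  have hE0 : 2 ≤ E := by
    have : 0 < E := by rw [hE]; positivity
    omega
  let z1 : ℤ√(-E) := ⟨3 ^ m - 2 ^ (N + 2), 1⟩
  let z2 : ℤ√(-E) := ⟨3 ^ (m + 2 * c) - 2 ^ (N + b + 2), 3 ^ c⟩
  have hz1 : z1.norm = 2 ^ (2 * N + 4) := by
    rw [aux_norm_neg]
    simp only [z1, hE, hdd]; ring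
  have hz2 : z2.norm = 2 ^ (2 * N + 2 * b + 4) := by
    rw [aux_norm_neg]
    simp only [z2, hE, hx]; ring
  have o1 : Odd z1.re := by
    apply Odd.sub_even
    · exact Odd.pow (by decide)
    · exact (even_two).pow_of_ne_zero (by omega)
  have o2 : Odd z2.re := by
    apply Odd.sub_even
    · exact Odd.pow (by decide)
    · exact (even_two).pow_of_ne_zero (by omega)
  have r13 : ¬ (3 : ℤ) ∣ z1.re := by
    have := n3 (N + 2)
    simp only [z1]; omega
  have r23 : ¬ (3 : ℤ) ∣ z2.re := by
    have := n3 (N + b + 2)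
    have d3' : (3 : ℤ) ∣ 3 ^ (m + 2 * c) := dvd_pow_self 3 (by omega)
    simp only [z2]; omega
  obtain ⟨w, w1, w2, w3⟩ := aux_prim2 z1
    (by rw [hz1]; exact (by norm_num : (8 : ℤ) = 2 ^ 3) ▸ pow_dvd_pow 2 (by omega)) o1
    (by simp only [z1]; exact odd_one) (N + b)
  obtain ⟨v, v1, v2, v3⟩ := aux_prim2 z2
    (by rw [hz2]; exact (by norm_num : (8 : ℤ) = 2 ^ 3) ▸ pow_dvd_pow 2 (by omega)) o2
    (by simp only [z2]; exact Odd.pow (by decide)) N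
  have nw : w.norm = 2 ^ ((2 * N + 2) * (N + b + 1) + 2) := by
    have := congrArg Zsqrtd.norm w3
    rw [aux_norm_pow, hz1, Zsqrtd.norm_mul, Zsqrtd.norm_intCast] at this
    have h0 : (2 : ℤ) ^ (N + b) * 2 ^ (N + b) ≠ 0 := by positivity
    apply mul_left_cancel₀ h0
    rw [← this, ← pow_mul, ← pow_add, ← pow_add]; congr 1; ring
  have nv : v.norm = 2 ^ ((2 * N + 2) * (N + b + 1) + 2) := by
    have := congrArg Zsqrtd.norm v3
    rw [aux_norm_pow, hz2, Zsqrtd.norm_mul, Zsqrtd.norm_intCast] at this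
    have h0 : (2 : ℤ) ^ N * 2 ^ N ≠ 0 := by positivity
    apply mul_left_cancel₀ h0
    rw [← this, ← pow_mul, ← pow_add, ← pow_add]; congr 1; ring
  have key := aux_eq2 E _ w.re w.im v.re v.im hE0
    (by rw [← aux_norm_neg, nw]) (by rw [← aux_norm_neg, nv]) w1 w2 v1 v2
  obtain ⟨s, t, ht, hst⟩ := Nat.exists_eq_pow_mul_and_not_dvd (n := N + b + 1) (by omega) 3 (by norm_num)
  obtain ⟨s', t', ht', hst'⟩ := Nat.exists_eq_pow_mul_and_not_dvd (n := N + 1) (by omega) 3 (by norm_num)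
  obtain ⟨k, hk, i1⟩ := aux_val3 (F := -E) (by omega) t ht s z1 r13
  obtain ⟨k', hk', i2⟩ := aux_val3 (F := -E) (by omega) t' ht' s' z2 r23
  rw [← hst, w3] at i1
  rw [← hst', v3] at i2
  simp only [Zsqrtd.im_mul, Zsqrtd.re_intCast, Zsqrtd.im_intCast, zero_mul, add_zero] at i1 i2
  have hdv : v.im ∣ w.im := by
    rw [← Int.pow_dvd_pow_iff (n := 2) (by norm_num), key]
  have hle : s' + c ≤ s := by
    apply aux_pow_dvd_le 3 h3 _ _ k hk
    have : (3 : ℤ) ^ s * k = 2 ^ (N + b) * w.im := by rw [i1]; simp only [z1]; ring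
    rw [this]
    refine Dvd.dvd.mul_left (Dvd.dvd.trans ?_ hdv) _
    have hh : (3 : ℤ) ^ (s' + c) ∣ 2 ^ N * v.im := ⟨k', by rw [i2]; simp only [z2]; ring⟩
    exact (((Prime.coprime_iff_not_dvd h3).mpr (n3 N)).pow_left).dvd_of_dvd_mul_left hh
  have hs0 : 3 ∣ N + b + 1 := by
    rw [hst]; exact (dvd_pow_self 3 (by omega)).mul_right t
  have hs' : s' ≠ 0 := by
    rintro rfl
    simp at hst'
    omega
  have hdvd : 3 ^ (c + 1) ∣ N + b + 1 := by
    rw [hst]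
    exact (pow_dvd_pow 3 (by omega)).mul_right t
  have hbig := Nat.le_of_dvd (by omega) hdvd
  have hlin := aux_lin3 c hc
  have p4 : (3 : ℤ) ^ (2 * c) ≤ 2 ^ (4 * c) := by
    rw [pow_mul, pow_mul]
    exact pow_le_pow_left₀ (by norm_num) (by norm_num) c
  have p3 : (1 : ℤ) < 3 ^ (2 * c) := one_lt_pow₀ (by norm_num) (by omega)
  have hb' : b < 4 * c := by
    have p1 : (0 : ℤ) < 3 ^ m := by positivity
    have p2 : (1 : ℤ) ≤ 2 ^ b := one_le_pow₀ (by norm_num)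
    have lt : (2 : ℤ) ^ b < 3 ^ (2 * c) := by
      by_contra hcon
      push Not at hcon
      nlinarith
    exact (pow_lt_pow_iff_right₀ (by norm_num : (1 : ℤ) < 2)).mp (lt_of_lt_of_le lt p4)
  have hn' : N + 3 < 4 * c := by
    have hdiv : (2 : ℤ) ^ (N + 3) ∣ 3 ^ m * (3 ^ (2 * c) - 1) := ⟨_, h⟩
    have hdiv' := (((Prime.coprime_iff_not_dvd h2).mpr (n2 m)).pow_left (m := N + 3)).dvd_of_dvd_mul_left hdiv
    have := Int.le_of_dvd (by linarith) hdiv'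
    exact (pow_lt_pow_iff_right₀ (by norm_num : (1 : ℤ) < 2)).mp (by linarith)
  omega

/-- residues of powers -/
lemma aux_per (g M r a : ℕ) (hg : g ^ r % M = 1 % M) : g ^ a % M = g ^ (a % r) % M := by
  conv_lhs => rw [← Nat.div_add_mod a r, pow_add, pow_mul, Nat.mul_mod, Nat.pow_mod, hg,
    ← Nat.pow_mod, one_pow, ← Nat.mul_mod, one_mul]

lemma aux_ord (g M r a : ℕ) (hr : 0 < r) (hg : g ^ r % M = 1 % M)
    (hall : ∀ i < r, g ^ i % M = 1 % M → i = 0) (h : g ^ a % M = 1 % M) : r ∣ a := by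
  rw [aux_per g M r a hg] at h
  exact Nat.dvd_of_mod_eq_zero (hall _ (Nat.mod_lt _ hr) h)

lemma aux_ord_dvd (g M r a : ℕ) (hr : 0 < r) (hg : g ^ r % M = 1 % M)
    (hall : ∀ i < r, g ^ i % M = 1 % M → i = 0) (h : (M : ℤ) ∣ (g : ℤ) ^ a - 1) : r ∣ a := by
  apply aux_ord g M r a hr hg hall
  have h' : ((g ^ a : ℕ) : ℤ) % (M : ℤ) = ((1 : ℕ) : ℤ) % (M : ℤ) := by
    push_cast
    exact (Int.modEq_iff_dvd.mpr h).symm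
  exact_mod_cast h'

lemma aux_dvd_ord (g M r a : ℕ) (hg : (M : ℤ) ∣ (g : ℤ) ^ r - 1) (h : r ∣ a) :
    (M : ℤ) ∣ (g : ℤ) ^ a - 1 := by
  obtain ⟨k, rfl⟩ := h
  rw [pow_mul]
  exact hg.trans (sub_one_dvd_pow_sub_one _ k)

lemma aux_ord_int (g M r a : ℕ) (G K : ℤ) (hG : (g : ℤ) = G) (hK : (M : ℤ) = K) (hr : 0 < r)
    (hg : g ^ r % M = 1 % M)
    (hall : ∀ i < r, g ^ i % M = 1 % M → i = 0) (h : K ∣ G ^ a - 1) : r ∣ a := by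
  subst hG hK
  exact aux_ord_dvd g M r a hr hg hall h

lemma aux_dvd_int (r a : ℕ) (G K : ℤ) (hg : K ∣ G ^ r - 1) (h : r ∣ a) :
    K ∣ G ^ a - 1 := by
  obtain ⟨k, rfl⟩ := h
  rw [pow_mul]
  exact hg.trans (sub_one_dvd_pow_sub_one _ k)

lemma aux_main (m n x y : ℕ) (hm : 0 < m) (hn : 0 < n)
    (hmx : m < x) (d : ℤ)
    (h1 : (3 : ℤ) ^ m - 2 ^ n = d) (h2 : (3 : ℤ) ^ x - 2 ^ y = d) :
    d = 1 ∨ d = -5 ∨ d = -13 := by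
  have hny : n < y := by
    have : (3 : ℤ) ^ m < 3 ^ x := (pow_lt_pow_iff_right₀ (by norm_num)).mpr hmx
    exact (pow_lt_pow_iff_right₀ (by norm_num : (1 : ℤ) < 2)).mp (by linarith)
  obtain ⟨a, rfl⟩ := Nat.exists_eq_add_of_lt hmx
  obtain ⟨b, rfl⟩ := Nat.exists_eq_add_of_lt hny
  rw [add_assoc] at h2
  rw [add_assoc n] at h2
  obtain ⟨a, ha, rfl⟩ : ∃ a', 0 < a' ∧ a' = a + 1 := ⟨a + 1, by omega, rfl⟩
  obtain ⟨b, hb, hb'⟩ : ∃ b', 0 < b' ∧ b' = b + 1 := ⟨b + 1, by omega, rfl⟩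
  obtain ⟨A, hA, hA'⟩ : ∃ A, 0 < A ∧ A = a + 1 := ⟨a + 1, by omega, rfl⟩
  rw [← hb', ← hA'] at h2
  clear hb' hA' hmx hny ha a
  have h : (3 : ℤ) ^ m * (3 ^ A - 1) = 2 ^ n * (2 ^ b - 1) := by
    rw [pow_add, pow_add] at h2; linarith
  have c23 : IsCoprime (2 : ℤ) 3 := by norm_num
  have P1 : ∀ M : ℤ, IsCoprime M 2 → M ∣ 3 ^ A - 1 → M ∣ 2 ^ b - 1 := fun M hM hd =>
    (hM.pow_right (n := n)).dvd_of_dvd_mul_left (h ▸ hd.mul_left _)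
  have P2 : ∀ M : ℤ, IsCoprime M 3 → M ∣ 2 ^ b - 1 → M ∣ 3 ^ A - 1 := fun M hM hd =>
    (hM.pow_right (n := m)).dvd_of_dvd_mul_left (h ▸ hd.mul_left _)
  have Q1 : (2 : ℤ) ^ n ∣ 3 ^ A - 1 :=
    (c23.pow (m := n) (n := m)).dvd_of_dvd_mul_left ⟨_, h⟩
  have Q2 : (3 : ℤ) ^ m ∣ 2 ^ b - 1 :=
    (c23.symm.pow (m := m) (n := n)).dvd_of_dvd_mul_left ⟨_, h.symm⟩
  have b2 : 2 ∣ b := aux_ord_int 2 3 2 b 2 3 (by norm_num) (by norm_num) (by norm_num) (by norm_num) (by decide)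
    ((dvd_pow_self (3 : ℤ) hm.ne').trans Q2)
  have b6 : 2 ≤ m → 6 ∣ b := fun hm2 => aux_ord_int 2 9 6 b 2 9 (by norm_num) (by norm_num) (by norm_num) (by norm_num) (by decide)
    (Dvd.dvd.trans (by rw [show (9 : ℤ) = 3 ^ 2 by norm_num]; exact pow_dvd_pow _ hm2) Q2)
  have b2' : (2 : ℤ) ∣ 2 ^ b := dvd_pow_self 2 hb.ne'
  have A8 : 2 ∣ A → n < 3 → False := fun hA2 hn3 => by
    have e8 : (8 : ℤ) ∣ 3 ^ m * (3 ^ A - 1) :=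
      (aux_dvd_int 2 A 3 8 (by norm_num) hA2).mul_left _
    rw [h] at e8
    interval_cases n <;> omega
  rcases Nat.lt_or_ge n 3 with hn3 | hn3
  · have : n = 1 ∨ n = 2 := by omega
    rcases this with rfl | rfl
    · rcases Nat.lt_or_ge m 2 with hm2 | hm2
      · have : m = 1 := by omega
        subst this
        left; rw [← h1]; norm_num
      · exfalso
        have e7 : (7 : ℤ) ∣ 2 ^ b - 1 := aux_dvd_int 6 b 2 7 (by norm_num) (b6 hm2)
        have : 6 ∣ A := aux_ord_int 3 7 6 A 3 7 (by norm_num) (by norm_num) (by norm_num) (by norm_num) (by decide)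
          (P2 7 (by norm_num) e7)
        exact A8 (by omega) (by norm_num)
    · exfalso
      exact A8 (aux_ord_int 3 4 2 A 3 4 (by norm_num) (by norm_num) (by norm_num) (by norm_num) (by decide)
        (by norm_num at Q1; exact Q1)) (by norm_num)
  · have A2 : 2 ∣ A := aux_ord_int 3 8 2 A 3 8 (by norm_num) (by norm_num) (by norm_num) (by norm_num) (by decide)
      (Dvd.dvd.trans (by rw [show (8 : ℤ) = 2 ^ 3 by norm_num]; exact pow_dvd_pow _ hn3) Q1)
    rcases lt_trichotomy ((2 : ℤ) ^ n) (3 ^ m) with hlt | heq | hgt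
    · exfalso
      obtain ⟨B, rfl⟩ := b2
      exact aux_pos m n A B hm hn (even_iff_two_dvd.mpr A2) (by omega) h hlt
    · exfalso
      have : (2 : ℤ) ∣ 3 ^ m := heq ▸ dvd_pow_self 2 hn.ne'
      have := Int.prime_two.dvd_of_dvd_pow this
      omega
    · rcases Nat.lt_or_ge m 2 with hm2 | hm2
      · have : m = 1 := by omega
        subst this
        rcases Nat.lt_or_ge n 5 with hn5 | hn5
        · have : n = 3 ∨ n = 4 := by omega
          rcases this with rfl | rfl
          · right; left; rw [← h1]; norm_num
          · right; right; rw [← h1]; norm_num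
        · exfalso
          have a8 : 8 ∣ A := aux_ord_int 3 32 8 A 3 32 (by norm_num) (by norm_num) (by norm_num) (by norm_num) (by decide)
            (Dvd.dvd.trans (by rw [show (32 : ℤ) = 2 ^ 5 by norm_num]; exact pow_dvd_pow _ hn5) Q1)
          have e41 : (41 : ℤ) ∣ 3 ^ A - 1 := aux_dvd_int 8 A 3 41 (by norm_num) a8
          have b20 : 20 ∣ b := aux_ord_int 2 41 20 b 2 41 (by norm_num) (by norm_num) (by norm_num) (by norm_num) (by decide)
            (P1 41 (by norm_num) e41)
          have e31 : (31 : ℤ) ∣ 2 ^ b - 1 := aux_dvd_int 20 b 2 31 (by norm_num) b20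
          have a30 : 30 ∣ A := aux_ord_int 3 31 30 A 3 31 (by norm_num) (by norm_num) (by norm_num) (by norm_num) (by decide)
            (P2 31 (by norm_num) e31)
          have e13 : (13 : ℤ) ∣ 3 ^ A - 1 := aux_dvd_int 30 A 3 13 (by norm_num) a30
          have b12 : 12 ∣ b := aux_ord_int 2 13 12 b 2 13 (by norm_num) (by norm_num) (by norm_num) (by norm_num) (by decide)
            (P1 13 (by norm_num) e13)
          have e9 : (9 : ℤ) ∣ 2 ^ b - 1 := aux_dvd_int 12 b 2 9 (by norm_num) b12
          have e9' := e9.mul_left (2 ^ n)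
          rw [← h] at e9'
          have h3A : (3 : ℤ) ∣ 3 ^ A := dvd_pow_self 3 hA.ne'
          rw [pow_one] at e9'
          generalize (3 : ℤ) ^ A = T at e9' h3A
          clear * - e9' h3A
          omega
      · exfalso
        obtain ⟨c, rfl⟩ := A2
        obtain ⟨N, rfl⟩ := Nat.exists_eq_add_of_le' hn3
        have := b6 hm2
        exact aux_neg m N c b hm2 (by omega) (by omega) hb h hgt

theorem stmt_16 (m n x y : ℕ) (hm : 0 < m) (hn : 0 < n) (hx : 0 < x) (hy : 0 < y)
    (hmx : m ≠ x) (d : ℤ)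
    (h1 : (3 : ℤ) ^ m - 2 ^ n = d) (h2 : (3 : ℤ) ^ x - 2 ^ y = d) :
    d = 1 ∨ d = -5 ∨ d = -13 := by
  rcases lt_or_gt_of_ne hmx with hlt | hgt
  · exact aux_main m n x y hm hn hlt d h1 h2
  · exact aux_main x y m n hx hy hgt d h2 h1
end
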